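/- arXiv:1610.04535 — 2 statements merged into one kernel-verified Lean document; each statement's English description precedes it below -/
import Mathlib

section
/- Assume neither p nor q is a root of unity, and set z_0 = 1, z_1 = z, z_2 = s, z_3 = t in A = A_p(λ, μ, K_q[s,t]). If a, b ∈ A \ K satisfy ab = Σ_{j=0}^{3} α_j z_j with all α_j ∈ K and α_1 ≠ 0, then there exist c, d ∈ K^× such that either a = c·y and b = d·x, or a = c·x and b = d·y. -/
/-!
The algebra `A` has the normal form `A = ⨁ K[z] w_n s^j t^k` over `(n, j, k) ∈ ℤ × ℕ × ℕ`, where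
`w_n = x^n` for `n ≥ 0` and `w_n = y^{-n}` for `n < 0`. To see this, let `A` act on the space
`PBW K` of finitely supported families of polynomials by the formulas that left multiplication
should obey (`rep`). The map `ofPBW` sending a family `f` to `∑ f_γ(z) w_n s^j t^k` is a
homomorphism of left modules (`ofPBW_rep`), hence surjective, and acting on the generator `1`
of `PBW K` inverts it (`rep_ofPBW`).

A product of two terms is again one term, with coefficient `f(z) g(p^n z) P(z)` for a nonzero
polynomial `P`; since `x y` and `y x` are linear in `z`, `P` has degree `|n|` when the
two `x`-degrees are `n` and `-n` (`ofPBW_single_mul_single`). Hence any exponent that is a sum of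
exponents of `a` and `b` in only one way occurs in `a b`, and for every additive weight the top parts
of `a` and `b` contribute to `a b` (`exists_top`).

Now let `a b = α₀ + α₁ z + α₂ s + α₃ t`. The weights `n` and `-n` show that `a` and `b` are
homogeneous of opposite `x`-degrees `n` and `-n`. The weight `j + k` shows that one of them, say `a`,
involves neither `s` nor `t`, so `a = f₀(z) w_n`. If `b` involved `s` or `t`, comparing `z`-degrees
of the coefficient there would give `n = 0` and `f₀` constant, so `a ∈ K`. Thus `b = g₀(z) w_{-n}` and
`deg f₀ + deg g₀ + |n| = 1`, as `α₁ ≠ 0` (`factors_single`). If `n = 0` one factor is a scalar;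
otherwise `n = ±1` with `f₀`, `g₀` constant, which is the claim.
-/

noncomputable section

open FreeAlgebra

/-- Relations of the extended quantized Weyl algebra `A_p(lam, mu, K_q[s,t])`. -/
inductive ExtWeylRel (K : Type*) [Field K] (p q lam mu : K) :
    FreeAlgebra K (Fin 4) → FreeAlgebra K (Fin 4) → Prop
  | weyl : ExtWeylRel K p q lam mu (ι K (0 : Fin 4) * ι K 1 - p • (ι K 1 * ι K 0)) 1
  | st : ExtWeylRel K p q lam mu (ι K (2 : Fin 4) * ι K 3) (q • (ι K 3 * ι K 2))
  | sx : ExtWeylRel K p q lam mu (ι K (2 : Fin 4) * ι K 0) (lam • (ι K 0 * ι K 2))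
  | sy : ExtWeylRel K p q lam mu (ι K (2 : Fin 4) * ι K 1) (lam⁻¹ • (ι K 1 * ι K 2))
  | tx : ExtWeylRel K p q lam mu (ι K (3 : Fin 4) * ι K 0) (mu • (ι K 0 * ι K 3))
  | ty : ExtWeylRel K p q lam mu (ι K (3 : Fin 4) * ι K 1) (mu⁻¹ • (ι K 1 * ι K 3))

/-- The extended quantized Weyl algebra `A_p(lam, mu, K_q[s,t])`. -/
abbrev ExtWeyl (K : Type*) [Field K] (p q lam mu : K) : Type _ :=
  RingQuot (ExtWeylRel K p q lam mu)

variable (K : Type*) [Field K] (p q lam mu : K)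

/-- The generator `x`. -/
def wx : ExtWeyl K p q lam mu := RingQuot.mkAlgHom K _ (ι K 0)
/-- The generator `y`. -/
def wy : ExtWeyl K p q lam mu := RingQuot.mkAlgHom K _ (ι K 1)
/-- The generator `s`. -/
def ws : ExtWeyl K p q lam mu := RingQuot.mkAlgHom K _ (ι K 2)
/-- The generator `t`. -/
def wt : ExtWeyl K p q lam mu := RingQuot.mkAlgHom K _ (ι K 3)
/-- The element `z = xy - yx`. -/
def wz : ExtWeyl K p q lam mu :=
  wx K p q lam mu * wy K p q lam mu - wy K p q lam mu * wx K p q lam mu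

/-! ### The action on the model space -/

section Model

open Polynomial

/-- The dilation `f(z) ↦ f(c z)` of the polynomial ring. -/
def scl {K : Type*} [Field K] (c : K) : K[X] →ₐ[K] K[X] := aeval (C c * X)

/-- The model space: finitely supported families of polynomials in `z`, indexed by the exponents
`(n, j, k)` of a monomial `w_n s^j t^k`. -/
abbrev PBW (K : Type*) [Field K] : Type _ := (ℤ × ℕ × ℕ) →₀ K[X]

/-- The operator on the model space sending `f` at position `γ` to `u γ * f(c z)` at position
`g γ`. -/
def shiftOp {K : Type*} [Field K] (g : ℤ × ℕ × ℕ → ℤ × ℕ × ℕ) (u : ℤ × ℕ × ℕ → K[X]) (c : K) :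
    Module.End K (PBW K) :=
  Finsupp.lsum K fun γ =>
    Finsupp.lsingle (g γ) ∘ₗ LinearMap.mulLeft K (u γ) ∘ₗ (scl c).toLinearMap

@[simp] lemma shiftOp_single {K : Type*} [Field K] (g : ℤ × ℕ × ℕ → ℤ × ℕ × ℕ)
    (u : ℤ × ℕ × ℕ → K[X]) (c : K) (γ : ℤ × ℕ × ℕ) (f : K[X]) :
    shiftOp g u c (Finsupp.single γ f) = Finsupp.single (g γ) (u γ * scl c f) := by
  simp [shiftOp]

@[simp] lemma scl_X {K : Type*} [Field K] (c : K) : scl c (X : K[X]) = C c * X := by simp [scl]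

@[simp] lemma scl_C {K : Type*} [Field K] (c a : K) : scl c (C a) = C a := by
  simp [scl]

lemma scl_scl {K : Type*} [Field K] (c d : K) (f : K[X]) : scl c (scl d f) = scl (d * c) f := by
  have : (scl c).comp (scl d) = scl (d * c) := by
    ext1
    simp [mul_assoc]
  exact DFunLike.congr_fun this f

@[simp] lemma scl_one {K : Type*} [Field K] (f : K[X]) : scl 1 f = f := by
  simp [scl]

lemma scl_eq_comp {K : Type*} [Field K] (c : K) (f : K[X]) : scl c f = f.comp (C c * X) := by
  simp [scl, aeval_def, comp]

lemma scl_ne_zero {K : Type*} [Field K] {c : K} (hc : c ≠ 0) {f : K[X]} (hf : f ≠ 0) :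
    scl c f ≠ 0 := by
  intro h
  apply hf
  have := scl_scl c⁻¹ c f
  rw [mul_inv_cancel₀ hc, scl_one, h, map_zero] at this
  exact this.symm

lemma natDegree_scl {K : Type*} [Field K] {c : K} (hc : c ≠ 0) (f : K[X]) :
    (scl c f).natDegree = f.natDegree := by
  rw [scl_eq_comp, natDegree_comp, natDegree_C_mul_X c hc, mul_one]

/-- The polynomial expressing `y x` through `z`, namely `(z - 1) / (p - 1)`. -/
def polYX {K : Type*} [Field K] (p : K) : K[X] := C (p - 1)⁻¹ * (X - 1)

/-- The polynomial expressing `x y` through `z`, namely `(p z - 1) / (p - 1)`. -/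
def polXY {K : Type*} [Field K] (p : K) : K[X] := C (p - 1)⁻¹ * (C p * X - 1)

/-- The structure polynomial in `x w_n = u(z) w_{n+1}`. -/
def uX {K : Type*} [Field K] (p : K) (n : ℤ) : K[X] := if 0 ≤ n then 1 else polXY p

/-- The structure polynomial in `y w_n = u(z) w_{n-1}`. -/
def uY {K : Type*} [Field K] (p : K) (n : ℤ) : K[X] := if 0 < n then polYX p else 1

/-- Action of `x` on the model space. -/
def opX {K : Type*} [Field K] (p : K) : Module.End K (PBW K) :=
  shiftOp (fun γ => (γ.1 + 1, γ.2.1, γ.2.2)) (fun γ => uX p γ.1) p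

/-- Action of `y` on the model space. -/
def opY {K : Type*} [Field K] (p : K) : Module.End K (PBW K) :=
  shiftOp (fun γ => (γ.1 - 1, γ.2.1, γ.2.2)) (fun γ => uY p γ.1) p⁻¹

/-- Action of `s` on the model space. -/
def opS {K : Type*} [Field K] (lam : K) : Module.End K (PBW K) :=
  shiftOp (fun γ => (γ.1, γ.2.1 + 1, γ.2.2)) (fun γ => C (lam ^ γ.1)) 1

/-- Action of `t` on the model space. -/
def opT {K : Type*} [Field K] (q mu : K) : Module.End K (PBW K) :=
  shiftOp (fun γ => (γ.1, γ.2.1, γ.2.2 + 1)) (fun γ => C (mu ^ γ.1 * (q⁻¹) ^ γ.2.1)) 1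

lemma scl_polYX {K : Type*} [Field K] (p : K) : scl p (polYX p) = polXY p := by
  simp [polYX, polXY]

lemma scl_polXY {K : Type*} [Field K] {p : K} (hp : p ≠ 0) : scl p⁻¹ (polXY p) = polYX p := by
  simp [polYX, polXY, ← mul_assoc, ← C_mul, hp]

lemma scl_uX {K : Type*} [Field K] (p c : K) (n : ℤ) :
    scl c (uX p n) = if 0 ≤ n then 1 else scl c (polXY p) := by
  unfold uX; split_ifs <;> simp

lemma scl_uY {K : Type*} [Field K] (p c : K) (n : ℤ) :
    scl c (uY p n) = if 0 < n then scl c (polYX p) else 1 := by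
  unfold uY; split_ifs <;> simp

lemma polXY_sub {K : Type*} [Field K] {p : K} (hp1 : p ≠ 1) :
    polXY p - C p * polYX p = 1 := by
  have h : p - 1 ≠ 0 := sub_ne_zero.mpr hp1
  have : polXY p - C p * polYX p = C ((p - 1)⁻¹ * (p - 1)) := by
    simp only [polXY, polYX, C_mul, C_sub, C_1]; ring
  rw [this, inv_mul_cancel₀ h, C_1]

lemma polXY_sub' {K : Type*} [Field K] {p : K} (hp1 : p ≠ 1) :
    polXY p - polYX p = X := by
  have h : p - 1 ≠ 0 := sub_ne_zero.mpr hp1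
  have : polXY p - polYX p = C ((p - 1)⁻¹ * (p - 1)) * X := by
    simp only [polXY, polYX, C_mul, C_sub, C_1]; ring
  rw [this, inv_mul_cancel₀ h, C_1, one_mul]

lemma natDegree_polYX {K : Type*} [Field K] {p : K} (hp1 : p ≠ 1) : (polYX p).natDegree = 1 := by
  have h : p - 1 ≠ 0 := sub_ne_zero.mpr hp1
  rw [polYX, natDegree_C_mul (inv_ne_zero h), ← C_1, natDegree_X_sub_C]

lemma natDegree_polXY {K : Type*} [Field K] {p : K} (hp : p ≠ 0) (hp1 : p ≠ 1) :
    (polXY p).natDegree = 1 := by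
  rw [← scl_polYX, natDegree_scl hp, natDegree_polYX hp1]

lemma polYX_ne_zero {K : Type*} [Field K] {p : K} (hp1 : p ≠ 1) : polYX p ≠ 0 := by
  intro h; have := natDegree_polYX hp1; simp [h] at this

lemma polXY_ne_zero {K : Type*} [Field K] {p : K} (hp : p ≠ 0) (hp1 : p ≠ 1) : polXY p ≠ 0 := by
  intro h; have := natDegree_polXY hp hp1; simp [h] at this

lemma opXY_single {K : Type*} [Field K] {p : K} (hp : p ≠ 0) (γ : ℤ × ℕ × ℕ) (f : K[X]) :
    opX p (opY p (Finsupp.single γ f)) = Finsupp.single γ (polXY p * f) := by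
  obtain ⟨n, j, k⟩ := γ
  simp only [opX, opY, shiftOp_single, sub_add_cancel, map_mul, scl_scl, inv_mul_cancel₀ hp,
    scl_one, ← mul_assoc, scl_uY, scl_polYX]
  congr 2
  unfold uX
  by_cases h : 0 < n
  · rw [if_pos (by omega), if_pos h, one_mul]
  · rw [if_neg (by omega), if_neg h, mul_one]

lemma opYX_single {K : Type*} [Field K] {p : K} (hp : p ≠ 0) (γ : ℤ × ℕ × ℕ) (f : K[X]) :
    opY p (opX p (Finsupp.single γ f)) = Finsupp.single γ (polYX p * f) := by
  obtain ⟨n, j, k⟩ := γ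
  simp only [opX, opY, shiftOp_single, add_sub_cancel_right, map_mul, scl_scl, mul_inv_cancel₀ hp,
    scl_one, ← mul_assoc, scl_uX, scl_polXY hp]
  congr 2
  unfold uY
  by_cases h : 0 ≤ n
  · rw [if_pos (by omega), if_pos h, mul_one]
  · rw [if_neg (by omega), if_neg h, one_mul]

lemma opZ_single {K : Type*} [Field K] {p : K} (hp : p ≠ 0) (hp1 : p ≠ 1)
    (γ : ℤ × ℕ × ℕ) (f : K[X]) :
    (opX p * opY p - opY p * opX p) (Finsupp.single γ f) = Finsupp.single γ (X * f) := by
  simp only [LinearMap.sub_apply, Module.End.mul_apply, opXY_single hp, opYX_single hp]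
  rw [← Finsupp.single_sub, ← sub_mul, polXY_sub' hp1]

/-- The action of the algebra on the model space. -/
def rep {K : Type*} [Field K] {p q lam mu : K} (hp : p ≠ 0) (hp1 : p ≠ 1) (hq : q ≠ 0)
    (hlam : lam ≠ 0) (hmu : mu ≠ 0) : ExtWeyl K p q lam mu →ₐ[K] Module.End K (PBW K) :=
  RingQuot.liftAlgHom K ⟨FreeAlgebra.lift K ![opX p, opY p, opS lam, opT q mu], by
    intro a b h
    induction h with
    | weyl =>
      refine Finsupp.lhom_ext fun γ f => ?_
      simp only [map_sub, map_mul, map_smul, FreeAlgebra.lift_ι_apply, map_one]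
      simp only [Matrix.cons_val, LinearMap.sub_apply, Module.End.mul_apply, LinearMap.smul_apply,
        opXY_single hp, opYX_single hp, Module.End.one_apply]
      rw [Finsupp.smul_single, ← Finsupp.single_sub, smul_eq_C_mul, ← mul_assoc, ← sub_mul,
        polXY_sub hp1, one_mul]
    | st =>
      refine Finsupp.lhom_ext fun γ f => ?_
      simp only [map_mul, map_smul, FreeAlgebra.lift_ι_apply]
      simp only [Matrix.cons_val, Module.End.mul_apply, LinearMap.smul_apply, opS, opT,
        shiftOp_single, scl_one, Finsupp.smul_single, smul_eq_C_mul, ← mul_assoc, ← C_mul]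
      congr 3
      rw [pow_succ]
      field_simp
    | sx =>
      refine Finsupp.lhom_ext fun γ f => ?_
      simp only [map_mul, map_smul, FreeAlgebra.lift_ι_apply]
      simp only [Matrix.cons_val, Module.End.mul_apply, LinearMap.smul_apply, opS, opX,
        shiftOp_single, scl_one, Finsupp.smul_single, smul_eq_C_mul, map_mul, scl_C,
        zpow_add_one₀ hlam]
      congr 1
      ring
    | sy =>
      refine Finsupp.lhom_ext fun γ f => ?_
      simp only [map_mul, map_smul, FreeAlgebra.lift_ι_apply]
      simp only [Matrix.cons_val, Module.End.mul_apply, LinearMap.smul_apply, opS, opY,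
        shiftOp_single, scl_one, Finsupp.smul_single, smul_eq_C_mul, map_mul, scl_C,
        zpow_sub_one₀ hlam]
      congr 1
      ring
    | tx =>
      refine Finsupp.lhom_ext fun γ f => ?_
      simp only [map_mul, map_smul, FreeAlgebra.lift_ι_apply]
      simp only [Matrix.cons_val, Module.End.mul_apply, LinearMap.smul_apply, opT, opX,
        shiftOp_single, scl_one, Finsupp.smul_single, smul_eq_C_mul, map_mul, scl_C,
        zpow_add_one₀ hmu]
      congr 1
      ring
    | ty =>
      refine Finsupp.lhom_ext fun γ f => ?_
      simp only [map_mul, map_smul, FreeAlgebra.lift_ι_apply]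
      simp only [Matrix.cons_val, Module.End.mul_apply, LinearMap.smul_apply, opT, opY,
        shiftOp_single, scl_one, Finsupp.smul_single, smul_eq_C_mul, map_mul, scl_C,
        zpow_sub_one₀ hmu]
      congr 1
      ring⟩

end Model

/-! ### Commutation relations -/

section Algebra

open Polynomial

variable {K p q lam mu}

local notation "𝐱" => wx K p q lam mu
local notation "𝐲" => wy K p q lam mu
local notation "𝐬" => ws K p q lam mu
local notation "𝐭" => wt K p q lam mu
local notation "𝐳" => wz K p q lam mu

lemma wx_mul_wy : 𝐱 * 𝐲 = 1 + p • (𝐲 * 𝐱) := by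
  have := RingQuot.mkAlgHom_rel K
    (ExtWeylRel.weyl (K := K) (p := p) (q := q) (lam := lam) (mu := mu))
  rw [map_sub, map_mul, map_smul, map_mul, map_one] at this
  exact sub_eq_iff_eq_add.mp this

lemma ws_mul_wt : 𝐬 * 𝐭 = q • (𝐭 * 𝐬) := by
  have := RingQuot.mkAlgHom_rel K
    (ExtWeylRel.st (K := K) (p := p) (q := q) (lam := lam) (mu := mu))
  rwa [map_mul, map_smul, map_mul] at this

lemma ws_mul_wx : 𝐬 * 𝐱 = lam • (𝐱 * 𝐬) := by
  have := RingQuot.mkAlgHom_rel K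
    (ExtWeylRel.sx (K := K) (p := p) (q := q) (lam := lam) (mu := mu))
  rwa [map_mul, map_smul, map_mul] at this

lemma ws_mul_wy : 𝐬 * 𝐲 = lam⁻¹ • (𝐲 * 𝐬) := by
  have := RingQuot.mkAlgHom_rel K
    (ExtWeylRel.sy (K := K) (p := p) (q := q) (lam := lam) (mu := mu))
  rwa [map_mul, map_smul, map_mul] at this

lemma wt_mul_wx : 𝐭 * 𝐱 = mu • (𝐱 * 𝐭) := by
  have := RingQuot.mkAlgHom_rel K
    (ExtWeylRel.tx (K := K) (p := p) (q := q) (lam := lam) (mu := mu))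
  rwa [map_mul, map_smul, map_mul] at this

lemma wt_mul_wy : 𝐭 * 𝐲 = mu⁻¹ • (𝐲 * 𝐭) := by
  have := RingQuot.mkAlgHom_rel K
    (ExtWeylRel.ty (K := K) (p := p) (q := q) (lam := lam) (mu := mu))
  rwa [map_mul, map_smul, map_mul] at this

lemma wz_eq : 𝐳 = 1 + (p - 1) • (𝐲 * 𝐱) := by
  rw [wz, wx_mul_wy]; module

lemma aeval_polYX (hp1 : p ≠ 1) : aeval 𝐳 (polYX p) = 𝐲 * 𝐱 := by
  have h : p - 1 ≠ 0 := sub_ne_zero.mpr hp1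
  simp only [polYX, ← smul_eq_C_mul, map_smul, map_sub, aeval_X, map_one]
  rw [wz_eq, add_sub_cancel_left, smul_smul, inv_mul_cancel₀ h, one_smul]

lemma aeval_polXY (hp1 : p ≠ 1) : aeval 𝐳 (polXY p) = 𝐱 * 𝐲 := by
  have h := polXY_sub hp1
  rw [sub_eq_iff_eq_add] at h
  rw [h, map_add, map_one, ← smul_eq_C_mul, map_smul, aeval_polYX hp1, wx_mul_wy]

/-- An intertwining relation `u * z = c z * u` passes to polynomials in `z`. -/
lemma mul_aeval_of_mul {A : Type*} [Ring A] [Algebra K A] {u z : A} {c : K}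
    (h : u * z = c • (z * u)) (f : K[X]) : u * aeval z f = aeval z (scl c f) * u := by
  induction f using Polynomial.induction_on with
  | C a => simp [Algebra.commutes]
  | add f g hf hg => simp only [map_add, mul_add, add_mul, hf, hg]
  | monomial n a ih =>
    rw [pow_succ, ← mul_assoc, map_mul (aeval z) _ X, map_mul (scl c) _ X,
      map_mul (aeval z) _ (scl c X), aeval_X, ← mul_assoc, ih, scl_X, mul_assoc, h,
      ← smul_eq_C_mul c, map_smul, aeval_X, mul_smul_comm, mul_smul_comm, smul_mul_assoc, mul_assoc]

lemma wx_mul_wz : 𝐱 * 𝐳 = p • (𝐳 * 𝐱) := by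
  have h : 𝐱 * (𝐲 * 𝐱) = 𝐱 + p • (𝐲 * 𝐱 * 𝐱) := by
    rw [← mul_assoc, wx_mul_wy, add_mul, one_mul, smul_mul_assoc]
  rw [wz_eq, mul_add, mul_one, mul_smul_comm, h, add_mul, one_mul, smul_mul_assoc]
  module

lemma wy_mul_wz (hp : p ≠ 0) : 𝐲 * 𝐳 = p⁻¹ • (𝐳 * 𝐲) := by
  have h : 𝐲 * 𝐱 * 𝐲 = 𝐲 + p • (𝐲 * (𝐲 * 𝐱)) := by
    rw [mul_assoc, wx_mul_wy, mul_add, mul_one, mul_smul_comm]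
  rw [eq_inv_smul_iff₀ hp, wz_eq, mul_add, mul_one, mul_smul_comm, add_mul, one_mul,
    smul_mul_assoc, h]
  module

lemma ws_mul_wz (hlam : lam ≠ 0) : 𝐬 * 𝐳 = 𝐳 * 𝐬 := by
  have h : 𝐬 * (𝐲 * 𝐱) = 𝐲 * 𝐱 * 𝐬 := by
    rw [← mul_assoc, ws_mul_wy, smul_mul_assoc, mul_assoc, ws_mul_wx, mul_smul_comm, smul_smul,
      inv_mul_cancel₀ hlam, one_smul, mul_assoc]
  rw [wz_eq, mul_add, add_mul, mul_smul_comm, smul_mul_assoc, h, one_mul, mul_one]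

lemma wt_mul_wz (hmu : mu ≠ 0) : 𝐭 * 𝐳 = 𝐳 * 𝐭 := by
  have h : 𝐭 * (𝐲 * 𝐱) = 𝐲 * 𝐱 * 𝐭 := by
    rw [← mul_assoc, wt_mul_wy, smul_mul_assoc, mul_assoc, wt_mul_wx, mul_smul_comm, smul_smul,
      inv_mul_cancel₀ hmu, one_smul, mul_assoc]
  rw [wz_eq, mul_add, add_mul, mul_smul_comm, smul_mul_assoc, h, one_mul, mul_one]

variable (K p q lam mu) in
/-- The element `w_n`: it is `x^n` for `n ≥ 0` and `y^{-n}` for `n < 0`. -/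
def ww : ℤ → ExtWeyl K p q lam mu
  | Int.ofNat n => wx K p q lam mu ^ n
  | Int.negSucc n => wy K p q lam mu ^ (n + 1)

local notation "𝐰" => ww K p q lam mu

lemma ww_natCast (n : ℕ) : 𝐰 (n : ℤ) = 𝐱 ^ n := rfl

@[simp] lemma ww_zero : 𝐰 0 = 1 := pow_zero _

lemma ww_neg_natCast (n : ℕ) : 𝐰 (-(n : ℤ)) = 𝐲 ^ n := by
  cases n with
  | zero => simp
  | succ n => rfl

lemma wx_mul_ww (hp1 : p ≠ 1) (n : ℤ) : 𝐱 * 𝐰 n = aeval 𝐳 (uX p n) * 𝐰 (n + 1) := by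
  obtain ⟨m, rfl | rfl⟩ := n.eq_nat_or_neg
  · rw [uX, if_pos (by omega), map_one, one_mul, ← Nat.cast_succ, ww_natCast, ww_natCast, pow_succ']
  · cases m with
    | zero =>
      have := ww_natCast (K := K) (p := p) (q := q) (lam := lam) (mu := mu) 1
      simp_all [uX]
    | succ m =>
      rw [uX, if_neg (by omega), aeval_polXY hp1,
        show -((m + 1 : ℕ) : ℤ) + 1 = -(m : ℤ) by push_cast; ring, ww_neg_natCast, ww_neg_natCast,
        pow_succ', mul_assoc]

lemma wy_mul_ww (hp1 : p ≠ 1) (n : ℤ) : 𝐲 * 𝐰 n = aeval 𝐳 (uY p n) * 𝐰 (n - 1) := by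
  obtain ⟨m, rfl | rfl⟩ := n.eq_nat_or_neg
  · cases m with
    | zero =>
      have := ww_neg_natCast (K := K) (p := p) (q := q) (lam := lam) (mu := mu) 1
      simp_all [uY]
    | succ m =>
      rw [uY, if_pos (by omega), aeval_polYX hp1,
        show ((m + 1 : ℕ) : ℤ) - 1 = (m : ℤ) by push_cast; ring, ww_natCast, ww_natCast,
        pow_succ', mul_assoc]
  · rw [uY, if_neg (by omega), map_one, one_mul,
      show -(m : ℤ) - 1 = -((m + 1 : ℕ) : ℤ) by push_cast; ring, ww_neg_natCast, ww_neg_natCast,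
      pow_succ']

/-- A `q`-commutation relation passes to powers. -/
lemma mul_pow_of_mul {A : Type*} [Ring A] [Algebra K A] {u v : A} {c : K}
    (h : u * v = c • (v * u)) (n : ℕ) : u * v ^ n = c ^ n • (v ^ n * u) := by
  induction n with
  | zero => simp
  | succ n ih =>
    rw [pow_succ, ← mul_assoc, ih, smul_mul_assoc, mul_assoc, h, mul_smul_comm, smul_smul,
      mul_assoc, pow_succ]

lemma ws_mul_ww (n : ℤ) : 𝐬 * 𝐰 n = lam ^ n • (𝐰 n * 𝐬) := by
  obtain ⟨m, rfl | rfl⟩ := n.eq_nat_or_neg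
  · rw [ww_natCast, mul_pow_of_mul ws_mul_wx, zpow_natCast]
  · rw [ww_neg_natCast, mul_pow_of_mul ws_mul_wy, zpow_neg, zpow_natCast, inv_pow]

lemma wt_mul_ww (n : ℤ) : 𝐭 * 𝐰 n = mu ^ n • (𝐰 n * 𝐭) := by
  obtain ⟨m, rfl | rfl⟩ := n.eq_nat_or_neg
  · rw [ww_natCast, mul_pow_of_mul wt_mul_wx, zpow_natCast]
  · rw [ww_neg_natCast, mul_pow_of_mul wt_mul_wy, zpow_neg, zpow_natCast, inv_pow]

lemma wt_mul_ws (hq : q ≠ 0) : 𝐭 * 𝐬 = q⁻¹ • (𝐬 * 𝐭) := by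
  rw [ws_mul_wt, smul_smul, inv_mul_cancel₀ hq, one_smul]

lemma ww_mul_aeval (hp : p ≠ 0) (n : ℤ) (f : K[X]) :
    𝐰 n * aeval 𝐳 f = aeval 𝐳 (scl (p ^ n) f) * 𝐰 n := by
  obtain ⟨m, rfl | rfl⟩ := n.eq_nat_or_neg
  · rw [ww_natCast, zpow_natCast]
    induction m generalizing f with
    | zero => simp
    | succ m ih =>
      rw [pow_succ, mul_assoc, mul_aeval_of_mul wx_mul_wz, ← mul_assoc, ih, scl_scl, mul_assoc,
        pow_succ']
  · rw [ww_neg_natCast, zpow_neg, zpow_natCast, ← inv_pow]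
    induction m generalizing f with
    | zero => simp
    | succ m ih =>
      rw [pow_succ, mul_assoc, mul_aeval_of_mul (wy_mul_wz hp), ← mul_assoc, ih, scl_scl,
        mul_assoc, pow_succ']

/-! ### The normal form -/

variable (K p q lam mu) in
/-- The monomial `w_n s^j t^k`. -/
def mon (γ : ℤ × ℕ × ℕ) : ExtWeyl K p q lam mu :=
  ww K p q lam mu γ.1 * (ws K p q lam mu ^ γ.2.1 * wt K p q lam mu ^ γ.2.2)

variable (K p q lam mu) in
/-- The map from the model space to the algebra, `(f_γ) ↦ ∑ f_γ(z) w_n s^j t^k`. -/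
def ofPBW : PBW K →ₗ[K] ExtWeyl K p q lam mu :=
  Finsupp.lsum K fun γ =>
    LinearMap.mulRight K (mon K p q lam mu γ) ∘ₗ (aeval (wz K p q lam mu)).toLinearMap

@[simp] lemma ofPBW_single (γ : ℤ × ℕ × ℕ) (f : K[X]) :
    ofPBW K p q lam mu (Finsupp.single γ f) = aeval 𝐳 f * mon K p q lam mu γ := by
  simp [ofPBW]

lemma ofPBW_opX (hp1 : p ≠ 1) (v : PBW K) :
    ofPBW K p q lam mu (opX p v) = 𝐱 * ofPBW K p q lam mu v := by
  induction v using Finsupp.induction_linear with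
  | zero => simp
  | add u v hu hv => simp only [map_add, mul_add, hu, hv]
  | single γ f =>
    rw [opX, shiftOp_single, ofPBW_single, ofPBW_single, ← mul_assoc,
      mul_aeval_of_mul wx_mul_wz, mon, mon, mul_assoc, ← mul_assoc 𝐱, wx_mul_ww hp1,
      mul_comm (uX _ _), map_mul]
    simp only [mul_assoc]

lemma ofPBW_opY (hp : p ≠ 0) (hp1 : p ≠ 1) (v : PBW K) :
    ofPBW K p q lam mu (opY p v) = 𝐲 * ofPBW K p q lam mu v := by
  induction v using Finsupp.induction_linear with
  | zero => simp
  | add u v hu hv => simp only [map_add, mul_add, hu, hv]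
  | single γ f =>
    rw [opY, shiftOp_single, ofPBW_single, ofPBW_single, ← mul_assoc,
      mul_aeval_of_mul (wy_mul_wz hp), mon, mon, mul_assoc, ← mul_assoc 𝐲, wy_mul_ww hp1,
      mul_comm (uY _ _), map_mul]
    simp only [mul_assoc]

lemma ofPBW_opS (hlam : lam ≠ 0) (v : PBW K) :
    ofPBW K p q lam mu (opS lam v) = 𝐬 * ofPBW K p q lam mu v := by
  have hz : 𝐬 * 𝐳 = (1 : K) • (𝐳 * 𝐬) := by rw [one_smul, ws_mul_wz hlam]
  induction v using Finsupp.induction_linear with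
  | zero => simp
  | add u v hu hv => simp only [map_add, mul_add, hu, hv]
  | single γ f =>
    rw [opS, shiftOp_single, ofPBW_single, ofPBW_single, ← mul_assoc,
      mul_aeval_of_mul hz, mon, mon, mul_assoc _ 𝐬, ← mul_assoc 𝐬, ws_mul_ww,
      ← smul_eq_C_mul, map_smul, pow_succ']
    simp only [mul_assoc, smul_mul_assoc, mul_smul_comm]

lemma ofPBW_opT (hq : q ≠ 0) (hmu : mu ≠ 0) (v : PBW K) :
    ofPBW K p q lam mu (opT q mu v) = 𝐭 * ofPBW K p q lam mu v := by
  have hz : 𝐭 * 𝐳 = (1 : K) • (𝐳 * 𝐭) := by rw [one_smul, wt_mul_wz hmu]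
  induction v using Finsupp.induction_linear with
  | zero => simp
  | add u v hu hv => simp only [map_add, mul_add, hu, hv]
  | single γ f =>
    rw [opT, shiftOp_single, ofPBW_single, ofPBW_single, ← mul_assoc,
      mul_aeval_of_mul hz, mon, mon, mul_assoc _ 𝐭, ← mul_assoc 𝐭, wt_mul_ww,
      smul_mul_assoc, mul_assoc _ 𝐭, ← mul_assoc 𝐭, mul_pow_of_mul (wt_mul_ws hq),
      ← smul_eq_C_mul, map_smul, pow_succ']
    simp only [mul_assoc, smul_mul_assoc, mul_smul_comm, smul_smul]

section Rep

variable (hp : p ≠ 0) (hp1 : p ≠ 1) (hq : q ≠ 0) (hlam : lam ≠ 0) (hmu : mu ≠ 0)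

lemma rep_wx : rep hp hp1 hq hlam hmu 𝐱 = opX p := by
  simp [rep, wx]

lemma rep_wy : rep hp hp1 hq hlam hmu 𝐲 = opY p := by
  simp [rep, wy]

lemma rep_ws : rep hp hp1 hq hlam hmu 𝐬 = opS lam := by
  simp [rep, ws]

lemma rep_wt : rep hp hp1 hq hlam hmu 𝐭 = opT q mu := by
  simp [rep, wt]

/-- The map `ofPBW` is a homomorphism of left modules. -/
lemma ofPBW_rep (a : ExtWeyl K p q lam mu) (v : PBW K) :
    ofPBW K p q lam mu (rep hp hp1 hq hlam hmu a v) = a * ofPBW K p q lam mu v := by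
  obtain ⟨a, rfl⟩ := RingQuot.mkAlgHom_surjective K _ a
  induction a using FreeAlgebra.induction generalizing v with
  | grade0 r => simp [Algebra.smul_def]
  | grade1 i =>
    match i with
    | 0 =>
      change ofPBW K p q lam mu (rep hp hp1 hq hlam hmu 𝐱 v) = 𝐱 * _
      rw [rep_wx, ofPBW_opX hp1]
    | 1 =>
      change ofPBW K p q lam mu (rep hp hp1 hq hlam hmu 𝐲 v) = 𝐲 * _
      rw [rep_wy, ofPBW_opY hp hp1]
    | 2 =>
      change ofPBW K p q lam mu (rep hp hp1 hq hlam hmu 𝐬 v) = 𝐬 * _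
      rw [rep_ws, ofPBW_opS hlam]
    | 3 =>
      change ofPBW K p q lam mu (rep hp hp1 hq hlam hmu 𝐭 v) = 𝐭 * _
      rw [rep_wt, ofPBW_opT hq hmu]
  | mul a b ha hb => rw [map_mul, map_mul, Module.End.mul_apply, ha, hb, mul_assoc]
  | add a b ha hb => rw [map_add, map_add, LinearMap.add_apply, map_add, ha, hb, add_mul]

lemma ofPBW_surjective (hp : p ≠ 0) (hp1 : p ≠ 1) (hq : q ≠ 0) (hlam : lam ≠ 0) (hmu : mu ≠ 0) :
    Function.Surjective (ofPBW K p q lam mu) := fun a =>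
  ⟨rep hp hp1 hq hlam hmu a (Finsupp.single 0 1), by
    rw [ofPBW_rep, ofPBW_single]; simp [mon]⟩

lemma opX_pow (n j k : ℕ) :
    (opX p ^ n) (Finsupp.single (0, j, k) 1) = Finsupp.single ((n : ℤ), j, k) (1 : K[X]) := by
  induction n with
  | zero => simp
  | succ n ih =>
    rw [pow_succ', Module.End.mul_apply, ih, opX, shiftOp_single, uX, if_pos (by simp)]
    simp

lemma opY_pow (n j k : ℕ) :
    (opY p ^ n) (Finsupp.single (0, j, k) 1) = Finsupp.single (-(n : ℤ), j, k) (1 : K[X]) := by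
  induction n with
  | zero => simp
  | succ n ih =>
    rw [pow_succ', Module.End.mul_apply, ih, opY, shiftOp_single, uY, if_neg (by simp)]
    simp [sub_eq_add_neg, add_comm]

lemma opS_pow (j k : ℕ) :
    (opS lam ^ j) (Finsupp.single (0, 0, k) 1) = Finsupp.single (0, j, k) (1 : K[X]) := by
  induction j with
  | zero => simp
  | succ n ih =>
    rw [pow_succ', Module.End.mul_apply, ih, opS, shiftOp_single]
    simp

lemma opT_pow (k : ℕ) :
    (opT q mu ^ k) (Finsupp.single 0 1) = Finsupp.single (0, 0, k) (1 : K[X]) := by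
  induction k with
  | zero => simp; rfl
  | succ n ih =>
    rw [pow_succ', Module.End.mul_apply, ih, opT, shiftOp_single]
    simp

lemma rep_aeval_wz (f g : K[X]) (γ : ℤ × ℕ × ℕ) :
    rep hp hp1 hq hlam hmu (aeval 𝐳 f) (Finsupp.single γ g) = Finsupp.single γ (f * g) := by
  have hz : rep hp hp1 hq hlam hmu 𝐳 = opX p * opY p - opY p * opX p := by
    rw [wz, map_sub, map_mul, map_mul, rep_wx, rep_wy]
  induction f using Polynomial.induction_on generalizing g with
  | C a =>
    rw [aeval_C, AlgHom.commutes, Module.algebraMap_end_apply, Finsupp.smul_single, smul_eq_C_mul]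
  | add f f' hf hf' =>
    rw [map_add, map_add, LinearMap.add_apply, hf, hf', add_mul, Finsupp.single_add]
  | monomial n a ih =>
    rw [pow_succ, ← mul_assoc, map_mul (aeval 𝐳) _ X, map_mul, aeval_X, hz, Module.End.mul_apply,
      opZ_single hp hp1, ih, mul_assoc (C a * X ^ n)]

/-- Evaluation at the vacuum vector `w_0 = 1` inverts `ofPBW`. -/
lemma rep_ofPBW (v : PBW K) :
    rep hp hp1 hq hlam hmu (ofPBW K p q lam mu v) (Finsupp.single 0 1) = v := by
  induction v using Finsupp.induction_linear with
  | zero => simp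
  | add u v hu hv => rw [map_add, map_add, LinearMap.add_apply, hu, hv]
  | single γ f =>
    obtain ⟨n, j, k⟩ := γ
    rw [ofPBW_single, mon, map_mul, map_mul, map_mul, map_pow, map_pow, rep_ws, rep_wt]
    simp only [Module.End.mul_apply]
    rw [opT_pow, opS_pow]
    obtain ⟨m, rfl | rfl⟩ := n.eq_nat_or_neg
    · rw [ww_natCast, map_pow, rep_wx, opX_pow, rep_aeval_wz, mul_one]
    · rw [ww_neg_natCast, map_pow, rep_wy, opY_pow, rep_aeval_wz, mul_one]

lemma ofPBW_injective (hp : p ≠ 0) (hp1 : p ≠ 1) (hq : q ≠ 0) (hlam : lam ≠ 0) (hmu : mu ≠ 0) :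
    Function.Injective (ofPBW K p q lam mu) := fun u v h => by
  rw [← rep_ofPBW hp hp1 hq hlam hmu u, h, rep_ofPBW]

end Rep

/-! ### Products of terms -/

/-- `u` and `v` commute up to a nonzero scalar. -/
def QComm (K : Type*) [Field K] {A : Type*} [Ring A] [Algebra K A] (u v : A) : Prop :=
  ∃ c : K, c ≠ 0 ∧ u * v = c • (v * u)

section QComm

variable {A : Type*} [Ring A] [Algebra K A] {u v w : A}

lemma QComm.symm (h : QComm K u v) : QComm K v u := by
  obtain ⟨c, hc, h⟩ := h
  exact ⟨c⁻¹, inv_ne_zero hc, by rw [h, smul_smul, inv_mul_cancel₀ hc, one_smul]⟩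

lemma QComm.pow_right (h : QComm K u v) (n : ℕ) : QComm K u (v ^ n) := by
  obtain ⟨c, hc, h⟩ := h
  exact ⟨c ^ n, pow_ne_zero n hc, mul_pow_of_mul h n⟩

lemma QComm.mul_left (h : QComm K u w) (h' : QComm K v w) : QComm K (u * v) w := by
  obtain ⟨c, hc, h⟩ := h
  obtain ⟨d, hd, h'⟩ := h'
  exact ⟨d * c, mul_ne_zero hd hc, by
    rw [mul_assoc, h', mul_smul_comm, ← mul_assoc, h, smul_mul_assoc, smul_smul, mul_assoc]⟩

end QComm

lemma st_mul_ww (hlam : lam ≠ 0) (hmu : mu ≠ 0) (j k : ℕ) (n : ℤ) :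
    QComm K (𝐬 ^ j * 𝐭 ^ k) (𝐰 n) := by
  have hs : QComm K 𝐬 (𝐰 n) := ⟨lam ^ n, zpow_ne_zero n hlam, ws_mul_ww n⟩
  have ht : QComm K 𝐭 (𝐰 n) := ⟨mu ^ n, zpow_ne_zero n hmu, wt_mul_ww n⟩
  exact (hs.symm.pow_right j).symm.mul_left (ht.symm.pow_right k).symm

/-- Products of monomials in `s` and `t`. -/
lemma st_mul_st (hq : q ≠ 0) (j k j' k' : ℕ) :
    ∃ c : K, c ≠ 0 ∧ 𝐬 ^ j * 𝐭 ^ k * (𝐬 ^ j' * 𝐭 ^ k') = c • (𝐬 ^ (j + j') * 𝐭 ^ (k + k')) := by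
  have h : QComm K 𝐬 𝐭 := ⟨q, hq, ws_mul_wt⟩
  obtain ⟨c, hc, h⟩ := ((h.pow_right k).symm).pow_right j'
  refine ⟨c, hc, ?_⟩
  rw [mul_assoc, ← mul_assoc (𝐭 ^ k), h, smul_mul_assoc, mul_smul_comm, pow_add, pow_add]
  simp only [mul_assoc]

lemma uX_ne_zero (hp : p ≠ 0) (hp1 : p ≠ 1) (n : ℤ) : uX p n ≠ 0 := by
  unfold uX; split_ifs
  · exact one_ne_zero
  · exact polXY_ne_zero hp hp1

lemma uY_ne_zero (hp1 : p ≠ 1) (n : ℤ) : uY p n ≠ 0 := by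
  unfold uY; split_ifs
  · exact polYX_ne_zero hp1
  · exact one_ne_zero

lemma wx_pow_mul_ww (hp : p ≠ 0) (hp1 : p ≠ 1) (n : ℕ) (m : ℤ) :
    ∃ P : K[X], P ≠ 0 ∧ (n + m ≤ 0 → P.natDegree = n) ∧
      𝐱 ^ n * 𝐰 m = aeval 𝐳 P * 𝐰 (n + m) := by
  induction n with
  | zero => exact ⟨1, one_ne_zero, by simp, by simp⟩
  | succ n ih =>
    obtain ⟨P, hP, hdeg, h⟩ := ih
    refine ⟨scl p P * uX p (n + m), mul_ne_zero (scl_ne_zero hp hP) (uX_ne_zero hp hp1 _), ?_, ?_⟩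
    · intro hn
      push_cast at hn
      rw [natDegree_mul (scl_ne_zero hp hP) (uX_ne_zero hp hp1 _), natDegree_scl hp,
        hdeg (by omega), uX, if_neg (by omega), natDegree_polXY hp hp1]
    · rw [pow_succ', mul_assoc, h, ← mul_assoc, mul_aeval_of_mul wx_mul_wz, mul_assoc,
        wx_mul_ww hp1, map_mul, mul_assoc]
      congr 3
      push_cast
      ring

lemma wy_pow_mul_ww (hp : p ≠ 0) (hp1 : p ≠ 1) (n : ℕ) (m : ℤ) :
    ∃ P : K[X], P ≠ 0 ∧ (0 ≤ -n + m → P.natDegree = n) ∧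
      𝐲 ^ n * 𝐰 m = aeval 𝐳 P * 𝐰 (-n + m) := by
  induction n with
  | zero => exact ⟨1, one_ne_zero, by simp, by simp⟩
  | succ n ih =>
    obtain ⟨P, hP, hdeg, h⟩ := ih
    have hp' := inv_ne_zero hp
    refine ⟨scl p⁻¹ P * uY p (-n + m), mul_ne_zero (scl_ne_zero hp' hP) (uY_ne_zero hp1 _), ?_, ?_⟩
    · intro hn
      push_cast at hn
      rw [natDegree_mul (scl_ne_zero hp' hP) (uY_ne_zero hp1 _), natDegree_scl hp',
        hdeg (by omega), uY, if_pos (by omega), natDegree_polYX hp1]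
    · rw [pow_succ', mul_assoc, h, ← mul_assoc, mul_aeval_of_mul (wy_mul_wz hp), mul_assoc,
        wy_mul_ww hp1, map_mul, mul_assoc]
      congr 3
      push_cast
      ring

/-- `w_n w_m = P(z) w_{n+m}` with `P ≠ 0`, and `P` has degree `|n|` when `m = -n`. -/
lemma ww_mul_ww (hp : p ≠ 0) (hp1 : p ≠ 1) (n m : ℤ) :
    ∃ P : K[X], P ≠ 0 ∧ (n + m = 0 → P.natDegree = n.natAbs) ∧
      𝐰 n * 𝐰 m = aeval 𝐳 P * 𝐰 (n + m) := by
  obtain ⟨k, rfl | rfl⟩ := n.eq_nat_or_neg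
  · obtain ⟨P, hP, hd, h⟩ := wx_pow_mul_ww (q := q) (lam := lam) (mu := mu) hp hp1 k m
    exact ⟨P, hP, fun h0 => by rw [hd h0.le]; simp, by rw [ww_natCast, h]⟩
  · obtain ⟨P, hP, hd, h⟩ := wy_pow_mul_ww (q := q) (lam := lam) (mu := mu) hp hp1 k m
    exact ⟨P, hP, fun h0 => by rw [hd h0.ge]; simp, by rw [ww_neg_natCast, h]⟩

/-- The algebra is a twisted product over the exponent monoid: the product of two terms is a
single term, with a nonzero structure polynomial `P`. -/
lemma ofPBW_single_mul_single (hp : p ≠ 0) (hp1 : p ≠ 1) (hq : q ≠ 0) (hlam : lam ≠ 0)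
    (hmu : mu ≠ 0) (γ δ : ℤ × ℕ × ℕ) :
    ∃ P : K[X], P ≠ 0 ∧ (γ.1 + δ.1 = 0 → P.natDegree = γ.1.natAbs) ∧ ∀ f g : K[X],
      ofPBW K p q lam mu (Finsupp.single γ f) * ofPBW K p q lam mu (Finsupp.single δ g) =
        ofPBW K p q lam mu (Finsupp.single (γ + δ) (f * scl (p ^ γ.1) g * P)) := by
  obtain ⟨n, j, k⟩ := γ
  obtain ⟨m, j', k'⟩ := δ
  obtain ⟨P, hP, hd, h⟩ := ww_mul_ww (q := q) (lam := lam) (mu := mu) hp hp1 n m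
  obtain ⟨c, hc, h1⟩ := st_mul_ww (p := p) (q := q) hlam hmu j k m
  obtain ⟨d, hd0, h2⟩ := st_mul_st (p := p) (lam := lam) (mu := mu) hq j k j' k'
  have hcd : c * d ≠ 0 := mul_ne_zero hc hd0
  have hmon : mon K p q lam mu (n, j, k) * mon K p q lam mu (m, j', k') =
      aeval 𝐳 (C (c * d) * P) * mon K p q lam mu (n + m, j + j', k + k') := by
    simp only [mon]
    rw [mul_assoc, ← mul_assoc (𝐬 ^ j * 𝐭 ^ k), h1, smul_mul_assoc, mul_assoc (𝐰 m), h2,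
      mul_smul_comm, mul_smul_comm, mul_smul_comm, smul_smul, ← mul_assoc (𝐰 n), h,
      ← smul_eq_C_mul, map_smul, smul_mul_assoc, mul_assoc]
  have hcomm : ∀ g : K[X], Commute (𝐬 ^ j * 𝐭 ^ k) (aeval 𝐳 g) := by
    intro g
    have hs : Commute 𝐬 (aeval 𝐳 g) := by
      have := mul_aeval_of_mul (u := 𝐬) (z := 𝐳) (c := (1 : K)) (by rw [one_smul, ws_mul_wz hlam]) g
      rwa [scl_one] at this
    have ht : Commute 𝐭 (aeval 𝐳 g) := by
      have := mul_aeval_of_mul (u := 𝐭) (z := 𝐳) (c := (1 : K)) (by rw [one_smul, wt_mul_wz hmu]) g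
      rwa [scl_one] at this
    exact (hs.pow_left j).mul_left (ht.pow_left k)
  refine ⟨C (c * d) * P, mul_ne_zero (C_ne_zero.mpr hcd) hP, ?_, fun f g => ?_⟩
  · intro h0
    rw [natDegree_C_mul hcd, hd h0]
  · have hmove : mon K p q lam mu (n, j, k) * aeval 𝐳 g =
        aeval 𝐳 (scl (p ^ n) g) * mon K p q lam mu (n, j, k) := by
      simp only [mon]
      rw [mul_assoc, (hcomm g).eq, ← mul_assoc, ww_mul_aeval hp, mul_assoc]
    rw [ofPBW_single, ofPBW_single, ofPBW_single, mul_assoc, ← mul_assoc (mon K p q lam mu (n, j, k)),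
      hmove, mul_assoc, hmon, map_mul _ _ (C (c * d) * P), map_mul _ f]
    simp only [mul_assoc, Prod.mk_add_mk]

end Algebra

/-! ### Supports of products -/

section Support

open Polynomial

variable {K p q lam mu}

/-- If `γ + δ` is attained only once as a sum of exponents, the coefficient of the product there
is the product of the coefficients, up to dilation and a nonzero structure polynomial. -/
lemma coeff_of_uniqueAdd (hp : p ≠ 0) (hp1 : p ≠ 1) (hq : q ≠ 0) (hlam : lam ≠ 0) (hmu : mu ≠ 0)
    {f g h : PBW K}
    (hfg : ofPBW K p q lam mu f * ofPBW K p q lam mu g = ofPBW K p q lam mu h)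
    {γ δ : ℤ × ℕ × ℕ} (hu : UniqueAdd f.support g.support γ δ) :
    ∃ P : K[X], P ≠ 0 ∧ (γ.1 + δ.1 = 0 → P.natDegree = γ.1.natAbs) ∧
      h (γ + δ) = f γ * scl (p ^ γ.1) (g δ) * P := by
  choose P hP hd hmul using ofPBW_single_mul_single (K := K) hp hp1 hq hlam hmu
  refine ⟨P γ δ, hP γ δ, hd γ δ, ?_⟩
  have key : h = ∑ γ' ∈ f.support, ∑ δ' ∈ g.support,
      Finsupp.single (γ' + δ') (f γ' * scl (p ^ γ'.1) (g δ') * P γ' δ') := by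
    apply ofPBW_injective hp hp1 hq hlam hmu
    rw [← hfg]
    conv_lhs => rw [← Finsupp.sum_single f, ← Finsupp.sum_single g]
    simp only [Finsupp.sum, map_sum, Finset.sum_mul, Finset.mul_sum, hmul]
    rw [Finset.sum_comm]
  rw [key]
  simp only [Finsupp.coe_finsetSum, Finset.sum_apply]
  rw [Finset.sum_eq_single γ, Finset.sum_eq_single δ, Finsupp.single_eq_same]
  · intro δ' hδ' hne
    rw [Finsupp.single_eq_of_ne]
    intro he
    exact hne (add_left_cancel he).symm
  · intro hδ
    simp [Finsupp.notMem_support_iff.mp hδ]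
  · intro γ' hγ' hne
    refine Finset.sum_eq_zero fun δ' hδ' => ?_
    rw [Finsupp.single_eq_of_ne]
    intro he
    exact hne (hu hγ' hδ' he.symm).1
  · intro hγ
    simp [Finsupp.notMem_support_iff.mp hγ]

lemma mem_support_of_uniqueAdd (hp : p ≠ 0) (hp1 : p ≠ 1) (hq : q ≠ 0) (hlam : lam ≠ 0)
    (hmu : mu ≠ 0) {f g h : PBW K}
    (hfg : ofPBW K p q lam mu f * ofPBW K p q lam mu g = ofPBW K p q lam mu h)
    {γ δ : ℤ × ℕ × ℕ} (hγ : γ ∈ f.support) (hδ : δ ∈ g.support)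
    (hu : UniqueAdd f.support g.support γ δ) : γ + δ ∈ h.support := by
  obtain ⟨P, hP, -, he⟩ := coeff_of_uniqueAdd hp hp1 hq hlam hmu hfg hu
  rw [Finsupp.mem_support_iff] at hγ hδ ⊢
  rw [he]
  exact mul_ne_zero (mul_ne_zero hγ (scl_ne_zero (zpow_ne_zero _ hp) hδ)) hP

/-- For an additive weight `l`, the top-weight parts of two nonzero factors contribute an exponent
to the product. The exponent monoid has unique sums, so within the two top faces some sum is
attained only once, and weights rule out any other contribution. -/
lemma exists_top (hp : p ≠ 0) (hp1 : p ≠ 1) (hq : q ≠ 0) (hlam : lam ≠ 0) (hmu : mu ≠ 0)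
    {f g h : PBW K}
    (hfg : ofPBW K p q lam mu f * ofPBW K p q lam mu g = ofPBW K p q lam mu h)
    (hf : f ≠ 0) (hg : g ≠ 0) (l : ℤ × ℕ × ℕ →+ ℤ) :
    ∃ γ ∈ f.support, ∃ δ ∈ g.support, γ + δ ∈ h.support ∧
      (∀ γ' ∈ f.support, l γ' ≤ l γ) ∧ ∀ δ' ∈ g.support, l δ' ≤ l δ := by
  obtain ⟨γ₀, hγ₀, hγm⟩ := f.support.exists_max_image l (Finsupp.support_nonempty_iff.mpr hf)
  obtain ⟨δ₀, hδ₀, hδm⟩ := g.support.exists_max_image l (Finsupp.support_nonempty_iff.mpr hg)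
  obtain ⟨γ, hγ, δ, hδ, hu⟩ := UniqueSums.uniqueAdd_of_nonempty
    (A := f.support.filter (fun γ => l γ = l γ₀)) (B := g.support.filter (fun δ => l δ = l δ₀))
    ⟨γ₀, by simpa using hγ₀⟩ ⟨δ₀, by simpa using hδ₀⟩
  rw [Finset.mem_filter] at hγ hδ
  refine ⟨γ, hγ.1, δ, hδ.1, ?_, by rwa [hγ.2], by rwa [hδ.2]⟩
  refine mem_support_of_uniqueAdd hp hp1 hq hlam hmu hfg hγ.1 hδ.1 fun γ' δ' hγ' hδ' he => ?_
  have h1 := hγm γ' hγ'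
  have h2 := hδm δ' hδ'
  have h3 := congrArg l he
  rw [map_add, map_add, hγ.2, hδ.2] at h3
  exact hu (Finset.mem_filter.mpr ⟨hγ', by omega⟩) (Finset.mem_filter.mpr ⟨hδ', by omega⟩) he

/-! ### Factors of `α₀ + α₁ z + α₂ s + α₃ t` -/

/-- The target `α₀ + α₁ z + α₂ s + α₃ t` in the model space. -/
def target (α₀ α₁ α₂ α₃ : K) : PBW K :=
  Finsupp.single 0 (C α₀ + C α₁ * X) + Finsupp.single (0, 1, 0) (C α₂) +
    Finsupp.single (0, 0, 1) (C α₃)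

lemma ofPBW_target (α₀ α₁ α₂ α₃ : K) :
    ofPBW K p q lam mu (target α₀ α₁ α₂ α₃) = α₀ • (1 : ExtWeyl K p q lam mu) +
      α₁ • wz K p q lam mu + α₂ • ws K p q lam mu + α₃ • wt K p q lam mu := by
  rw [target, map_add, map_add, ofPBW_single, ofPBW_single, ofPBW_single]
  simp [mon, Algebra.smul_def]

lemma target_support {α₀ α₁ α₂ α₃ : K} {γ : ℤ × ℕ × ℕ}
    (h : γ ∈ (target α₀ α₁ α₂ α₃).support) :
    γ = 0 ∨ γ = (0, 1, 0) ∨ γ = (0, 0, 1) := by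
  by_contra! hne
  obtain ⟨h0, h1, h2⟩ := hne
  rw [Finsupp.mem_support_iff] at h
  apply h
  simp [target, h0.symm, h1.symm, h2.symm]

lemma natDegree_target {α₀ α₁ α₂ α₃ : K} (hα₁ : α₁ ≠ 0) :
    (target α₀ α₁ α₂ α₃ 0).natDegree = 1 := by
  have : target α₀ α₁ α₂ α₃ 0 = C α₁ * X + C α₀ := by
    simp [target, Prod.ext_iff, add_comm]
  rw [this, natDegree_linear hα₁]

lemma natDegree_target_of_ne {α₀ α₁ α₂ α₃ : K} {γ : ℤ × ℕ × ℕ} (hγ : γ ≠ 0) :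
    (target α₀ α₁ α₂ α₃ γ).natDegree = 0 := by
  have : target α₀ α₁ α₂ α₃ γ =
      C ((if (0, 1, 0) = γ then α₂ else 0) + if (0, 0, 1) = γ then α₃ else 0) := by
    simp only [target, Finsupp.add_apply, Finsupp.single_apply, hγ.symm, if_false, zero_add, map_add]
    split_ifs <;> simp
  rw [this, natDegree_C]

lemma ofPBW_single_mem_bot {f : K[X]} (hf : f.natDegree = 0) :
    ofPBW K p q lam mu (Finsupp.single 0 f) ∈ (⊥ : Subalgebra K (ExtWeyl K p q lam mu)) := by
  rw [eq_C_of_natDegree_eq_zero hf, Algebra.mem_bot]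
  exact ⟨f.coeff 0, by rw [ofPBW_single]; simp [mon]⟩

/-- Both factors live in a single `x`-degree, and these degrees are opposite. -/
lemma exists_xdegree (hp : p ≠ 0) (hp1 : p ≠ 1) (hq : q ≠ 0) (hlam : lam ≠ 0) (hmu : mu ≠ 0)
    {f g : PBW K} {α₀ α₁ α₂ α₃ : K}
    (hfg : ofPBW K p q lam mu f * ofPBW K p q lam mu g =
      ofPBW K p q lam mu (target α₀ α₁ α₂ α₃)) (hf : f ≠ 0) (hg : g ≠ 0) :
    ∃ n : ℤ, (∀ γ ∈ f.support, γ.1 = n) ∧ ∀ δ ∈ g.support, δ.1 = -n := by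
  obtain ⟨γ₁, hγ₁, δ₁, hδ₁, h₁, hf₁, hg₁⟩ :=
    exists_top hp hp1 hq hlam hmu hfg hf hg (AddMonoidHom.fst ℤ (ℕ × ℕ))
  obtain ⟨γ₂, hγ₂, δ₂, hδ₂, h₂, hf₂, hg₂⟩ :=
    exists_top hp hp1 hq hlam hmu hfg hf hg (-AddMonoidHom.fst ℤ (ℕ × ℕ))
  simp only [AddMonoidHom.neg_apply, AddMonoidHom.coe_fst] at hf₁ hg₁ hf₂ hg₂
  have e₁ : γ₁.1 + δ₁.1 = 0 := by
    rw [← Prod.fst_add]; rcases target_support h₁ with h | h | h <;> rw [h] <;> rfl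
  have e₂ : γ₂.1 + δ₂.1 = 0 := by
    rw [← Prod.fst_add]; rcases target_support h₂ with h | h | h <;> rw [h] <;> rfl
  have a₁ := hf₂ γ₁ hγ₁
  have a₂ := hg₂ δ₁ hδ₁
  have a₃ := hf₁ γ₂ hγ₂
  have a₄ := hg₁ δ₂ hδ₂
  refine ⟨γ₁.1, fun γ hγ => ?_, fun δ hδ => ?_⟩
  · have := hf₁ γ hγ
    have := hf₂ γ hγ
    omega
  · have := hg₁ δ hδ
    have := hg₂ δ hδ
    omega

/-- The `(s, t)`-degree of the product is at most one, so one factor has degree zero. -/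
lemma stdegree_zero (hp : p ≠ 0) (hp1 : p ≠ 1) (hq : q ≠ 0) (hlam : lam ≠ 0) (hmu : mu ≠ 0)
    {f g : PBW K} {α₀ α₁ α₂ α₃ : K}
    (hfg : ofPBW K p q lam mu f * ofPBW K p q lam mu g =
      ofPBW K p q lam mu (target α₀ α₁ α₂ α₃)) (hf : f ≠ 0) (hg : g ≠ 0) :
    (∀ γ ∈ f.support, γ.2 = 0) ∨ ∀ δ ∈ g.support, δ.2 = 0 := by
  let l : ℤ × ℕ × ℕ →+ ℤ :=
    { toFun := fun γ => (γ.2.1 : ℤ) + γ.2.2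
      map_zero' := by simp
      map_add' := fun a b => by simp only [Prod.snd_add, Prod.fst_add]; push_cast; ring }
  have hl : ∀ γ, l γ = (γ.2.1 : ℤ) + γ.2.2 := fun _ => rfl
  obtain ⟨γ₁, hγ₁, δ₁, hδ₁, h₁, hf₁, hg₁⟩ := exists_top hp hp1 hq hlam hmu hfg hf hg l
  have e₁ : l γ₁ + l δ₁ ≤ 1 := by
    rw [← map_add]; rcases target_support h₁ with h | h | h <;> rw [h, hl] <;> simp
  simp only [hl] at e₁ hf₁ hg₁
  by_cases hc : γ₁.2.1 = 0 ∧ γ₁.2.2 = 0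
  · left
    intro γ hγ
    have := hf₁ γ hγ
    exact Prod.ext (by simp; omega) (by simp; omega)
  · right
    intro δ hδ
    have := hg₁ δ hδ
    exact Prod.ext (by simp; omega) (by simp; omega)

/-- Degrees in `z` of a coefficient of the product coming from a unique pair of exponents with
opposite `x`-degrees. -/
lemma natDegree_coeff (hp : p ≠ 0) (hp1 : p ≠ 1) (hq : q ≠ 0) (hlam : lam ≠ 0) (hmu : mu ≠ 0)
    {f g h : PBW K}
    (hfg : ofPBW K p q lam mu f * ofPBW K p q lam mu g = ofPBW K p q lam mu h)
    {γ δ : ℤ × ℕ × ℕ} (hu : UniqueAdd f.support g.support γ δ) (h0 : γ.1 + δ.1 = 0)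
    (hγ : f γ ≠ 0) (hδ : g δ ≠ 0) :
    (h (γ + δ)).natDegree = (f γ).natDegree + (g δ).natDegree + γ.1.natAbs := by
  obtain ⟨P, hP, hd, he⟩ := coeff_of_uniqueAdd hp hp1 hq hlam hmu hfg hu
  have hc : p ^ γ.1 ≠ 0 := zpow_ne_zero _ hp
  have hs := scl_ne_zero hc hδ
  rw [he, natDegree_mul (mul_ne_zero hγ hs) hP, natDegree_mul hγ hs, natDegree_scl hc, hd h0]

/-- Each factor is a single term `f₀(z) w_n`, `g₀(z) w_{-n}`, and the degrees in `z` add up. -/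
lemma factors_single (hp : p ≠ 0) (hp1 : p ≠ 1) (hq : q ≠ 0) (hlam : lam ≠ 0) (hmu : mu ≠ 0)
    {f g : PBW K} {α₀ α₁ α₂ α₃ : K} (hα₁ : α₁ ≠ 0)
    (hfg : ofPBW K p q lam mu f * ofPBW K p q lam mu g =
      ofPBW K p q lam mu (target α₀ α₁ α₂ α₃)) (hf : f ≠ 0) (hg : g ≠ 0)
    (ha : ofPBW K p q lam mu f ∉ (⊥ : Subalgebra K (ExtWeyl K p q lam mu)))
    (hb : ofPBW K p q lam mu g ∉ (⊥ : Subalgebra K (ExtWeyl K p q lam mu))) :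
    ∃ (n : ℤ) (f₀ g₀ : K[X]), f₀ ≠ 0 ∧ g₀ ≠ 0 ∧ f = Finsupp.single (n, 0, 0) f₀ ∧
      g = Finsupp.single (-n, 0, 0) g₀ ∧ f₀.natDegree + g₀.natDegree + n.natAbs = 1 := by
  obtain ⟨n, hfn, hgn⟩ := exists_xdegree hp hp1 hq hlam hmu hfg hf hg
  have hsum : ((n, 0, 0) : ℤ × ℕ × ℕ) + (-n, 0, 0) = 0 := by ext <;> simp
  have ht := natDegree_target (α₀ := α₀) (α₂ := α₂) (α₃ := α₃) hα₁
  have ht0 : target α₀ α₁ α₂ α₃ 0 ≠ 0 := fun h => by simp [h] at ht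
  rcases stdegree_zero hp hp1 hq hlam hmu hfg hf hg with h | h
  · have hsub : ∀ γ ∈ f.support, γ = (n, 0, 0) := fun γ hγ => Prod.ext (hfn γ hγ) (h γ hγ)
    have hfs : f = Finsupp.single (n, 0, 0) (f (n, 0, 0)) :=
      Finsupp.eq_single_iff.mpr ⟨fun γ hγ => by simpa using hsub γ hγ, rfl⟩
    have hu : ∀ δ, UniqueAdd f.support g.support (n, 0, 0) δ := by
      intro δ γ' δ' hγ' _ he
      obtain rfl := hsub γ' hγ'
      exact ⟨rfl, add_left_cancel he⟩
    have hf0 : f (n, 0, 0) ≠ 0 := fun h0 => hf (by rw [hfs, h0, Finsupp.single_zero])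
    have hg0 : g (-n, 0, 0) ≠ 0 := by
      intro h0
      obtain ⟨P, -, -, he⟩ := coeff_of_uniqueAdd hp hp1 hq hlam hmu hfg (hu (-n, 0, 0))
      rw [hsum, h0] at he
      exact ht0 (by simpa using he)
    have hd := natDegree_coeff hp hp1 hq hlam hmu hfg (hu (-n, 0, 0)) (by simp) hf0 hg0
    rw [hsum, ht] at hd
    refine ⟨n, _, _, hf0, hg0, hfs, Finsupp.eq_single_iff.mpr ⟨fun δ hδ => ?_, rfl⟩, hd.symm⟩
    by_contra hne
    -- A further exponent of `g` would produce a scalar multiple of `s` or `t`, forcing `f` constant.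
    rw [Finset.mem_singleton] at hne
    have hd' := natDegree_coeff hp hp1 hq hlam hmu hfg (hu δ) (by simp [hgn δ hδ]) hf0
      (Finsupp.mem_support_iff.mp hδ)
    rw [natDegree_target_of_ne fun h0 => hne (add_left_cancel (h0.trans hsum.symm))] at hd'
    have hn : n = 0 := by simp only at hd'; omega
    subst hn
    apply ha
    rw [hfs]
    exact ofPBW_single_mem_bot (by omega)
  · have hsub : ∀ δ ∈ g.support, δ = (-n, 0, 0) := fun δ hδ => Prod.ext (hgn δ hδ) (h δ hδ)
    have hgs : g = Finsupp.single (-n, 0, 0) (g (-n, 0, 0)) :=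
      Finsupp.eq_single_iff.mpr ⟨fun δ hδ => by simpa using hsub δ hδ, rfl⟩
    have hu : ∀ γ, UniqueAdd f.support g.support γ (-n, 0, 0) := by
      intro γ γ' δ' _ hδ' he
      obtain rfl := hsub δ' hδ'
      exact ⟨add_right_cancel he, rfl⟩
    have hg0 : g (-n, 0, 0) ≠ 0 := fun h0 => hg (by rw [hgs, h0, Finsupp.single_zero])
    have hf0 : f (n, 0, 0) ≠ 0 := by
      intro h0
      obtain ⟨P, -, -, he⟩ := coeff_of_uniqueAdd hp hp1 hq hlam hmu hfg (hu (n, 0, 0))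
      rw [hsum, h0] at he
      exact ht0 (by simpa using he)
    have hd := natDegree_coeff hp hp1 hq hlam hmu hfg (hu (n, 0, 0)) (by simp) hf0 hg0
    rw [hsum, ht] at hd
    refine ⟨n, _, _, hf0, hg0, Finsupp.eq_single_iff.mpr ⟨fun γ hγ => ?_, rfl⟩, hgs, hd.symm⟩
    by_contra hne
    -- A further exponent of `f` would produce a scalar multiple of `s` or `t`, forcing `g` constant.
    rw [Finset.mem_singleton] at hne
    have hd' := natDegree_coeff hp hp1 hq hlam hmu hfg (hu γ) (by simp [hfn γ hγ])
      (Finsupp.mem_support_iff.mp hγ) hg0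
    rw [natDegree_target_of_ne fun h0 => hne (add_right_cancel (h0.trans hsum.symm)),
      hfn γ hγ] at hd'
    have hn : n = 0 := by omega
    subst hn
    apply hb
    rw [hgs]
    exact ofPBW_single_mem_bot (by omega)

lemma ofPBW_single_const {n : ℤ} {f : K[X]} (hf : f.natDegree = 0) :
    ofPBW K p q lam mu (Finsupp.single (n, 0, 0) f) = f.coeff 0 • ww K p q lam mu n := by
  conv_lhs => rw [eq_C_of_natDegree_eq_zero hf]
  rw [ofPBW_single]
  simp [mon, Algebra.smul_def]

end Support

/-- Assume neither `p` nor `q` is a root of unity, and set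
`z₀ = 1, z₁ = z, z₂ = s, z₃ = t` in `A = A_p(λ, μ, K_q[s,t])`. If `a, b ∈ A \ K` satisfy
`ab = Σ_{j=0}^{3} α_j z_j` with all `α_j ∈ K` and `α₁ ≠ 0`, then there exist `c, d ∈ K^×`
such that either `a = c·y` and `b = d·x`, or `a = c·x` and `b = d·y`. -/
theorem extWeyl_product_lemma
    (hp : p ≠ 0) (hq : q ≠ 0) (hlam : lam ≠ 0) (hmu : mu ≠ 0)
    (hpru : ∀ n : ℕ, 0 < n → p ^ n ≠ 1) (hqru : ∀ n : ℕ, 0 < n → q ^ n ≠ 1)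
    (a b : ExtWeyl K p q lam mu)
    (ha : a ∉ (⊥ : Subalgebra K (ExtWeyl K p q lam mu)))
    (hb : b ∉ (⊥ : Subalgebra K (ExtWeyl K p q lam mu)))
    (α₀ α₁ α₂ α₃ : K) (hα₁ : α₁ ≠ 0)
    (hab : a * b = α₀ • (1 : ExtWeyl K p q lam mu) + α₁ • wz K p q lam mu +
      α₂ • ws K p q lam mu + α₃ • wt K p q lam mu) :
    ∃ c d : Kˣ,
      (a = (c : K) • wy K p q lam mu ∧ b = (d : K) • wx K p q lam mu) ∨
      (a = (c : K) • wx K p q lam mu ∧ b = (d : K) • wy K p q lam mu) := by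
  have hp1 : p ≠ 1 := by simpa using hpru 1 one_pos
  obtain ⟨f, rfl⟩ := ofPBW_surjective hp hp1 hq hlam hmu a
  obtain ⟨g, rfl⟩ := ofPBW_surjective hp hp1 hq hlam hmu b
  rw [← ofPBW_target] at hab
  have hf : f ≠ 0 := by
    rintro rfl
    exact ha (by rw [map_zero]; exact zero_mem _)
  have hg : g ≠ 0 := by
    rintro rfl
    exact hb (by rw [map_zero]; exact zero_mem _)
  obtain ⟨n, f₀, g₀, hf₀, hg₀, rfl, rfl, hd⟩ :=
    factors_single hp hp1 hq hlam hmu hα₁ hab hf hg ha hb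
  rcases Nat.eq_zero_or_pos n.natAbs with hn | hn
  · obtain rfl := Int.natAbs_eq_zero.mp hn
    rcases Nat.eq_zero_or_pos f₀.natDegree with h | h
    · exact absurd (ofPBW_single_mem_bot h) ha
    · exact absurd (ofPBW_single_mem_bot (f := g₀) (by omega)) hb
  · have hfd : f₀.natDegree = 0 := by omega
    have hgd : g₀.natDegree = 0 := by omega
    have hfc : f₀.coeff 0 ≠ 0 := fun h => hf₀ (by
      rw [Polynomial.eq_C_of_natDegree_eq_zero hfd, h, Polynomial.C_0])
    have hgc : g₀.coeff 0 ≠ 0 := fun h => hg₀ (by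
      rw [Polynomial.eq_C_of_natDegree_eq_zero hgd, h, Polynomial.C_0])
    have hx : ww K p q lam mu 1 = wx K p q lam mu := pow_one _
    have hy : ww K p q lam mu (-1) = wy K p q lam mu := pow_one _
    refine ⟨Units.mk0 _ hfc, Units.mk0 _ hgc, ?_⟩
    rw [ofPBW_single_const hfd, ofPBW_single_const hgd, Units.val_mk0, Units.val_mk0]
    obtain rfl | rfl : n = 1 ∨ n = -1 := by omega
    · right
      rw [hx, hy]
      exact ⟨rfl, rfl⟩
    · left
      rw [neg_neg, hx, hy]
      exact ⟨rfl, rfl⟩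
end
end

section
/- Assume neither p nor q is a root of unity. Then every K-algebra automorphism φ of A_p(λ, μ, K_q[s,t]) satisfies φ(x) = α·x, φ(y) = α⁻¹·y, φ(s) = β·s and φ(t) = γ·t for some α, β, γ ∈ K^× (in particular φ(z) = z); conversely, for any α, β, γ ∈ K^× these formulas define a K-algebra automorphism φ_{α,β,γ}, and the automorphism group Aut_K(A_p(λ, μ, K_q[s,t])) is isomorphic to the group (K^×)^3 via (α,β,γ) ↦ φ_{α,β,γ}. -/
/-!
The algebra embeds in a quantum torus with basis the Laurent monomials `z^j x^m s^k t^l`, by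
`y ↦ (p - 1)⁻¹ (z - 1) x⁻¹`: the ordered monomials `y^i x^j s^k t^l` span it (`span_pbw`), and their
images have distinct leading exponents (`IsEmb.injective`). In the torus, leading and trailing terms
with respect to the lexicographic order are multiplicative.

If `n` is a nonzero normal element and `v` is a monomial of the algebra, then `n v = v' n` forces
`v'` to be a multiple of `v`. Taking `v = z, s, t, x` and using that `p` and `q` are not roots of
unity, `n` is a multiple of one monomial `z^j x^m s^k t^l`. Moreover `n y n⁻¹` must lie in the
algebra, where coefficients in negative `x`-degree are divisible by `z - 1`; this gives `m = 0`
(`IsEmb.normal_isMono`).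

The elements `z`, `s`, `t` are normal, so an automorphism `φ` and its inverse send each of them to a
multiple of a monomial in `z`, `s`, `t`. The exponent matrices are inverse to each other over `ℕ`, and
`st = q·ts` with `z` commuting with both leaves only the identity matrix (`IsEmb.aut_zst`). The
relations of `x` and `y` with `z`, `s`, `t` then give `φ x = f(z) x` and `φ y = g(z) x⁻¹` in the torus,
and comparing degrees in `φ x * φ y = (p φ(z) - 1) / (p - 1)` shows that `φ` scales `x` and `y`
(`IsEmb.aut_xy`). The scalars are inverse to each other by `xy - p·yx = 1`.
-/

noncomputable section

open FreeAlgebra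

variable (K : Type*) [Field K] (p q lam mu : K)

/-! ### The quantum torus -/

section QuantumTorus

variable {K}

/-- Exponents `(j, m, k, l)` of Laurent monomials `z^j x^m s^k t^l`. -/
abbrev Expo : Type := ℤ × ℤ × ℤ × ℤ

/-- The bicharacter with `E v * E w = chi v w • E (v + w)`, where `E (j, m, k, l)` is the normally
ordered Laurent monomial `z^j x^m s^k t^l`, and `xz = p·zx`, `sx = λ·xs`, `tx = μ·xt`, `st = q·ts` and `z` commutes with
`s` and `t`. -/
def chi (P Q L M : Kˣ) (v w : Expo) : Kˣ :=
  P ^ (v.2.1 * w.1) * L ^ (v.2.2.1 * w.2.1) * M ^ (v.2.2.2 * w.2.1) * Q ^ (-(v.2.2.2 * w.2.2.1))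

lemma chi_add_left (P Q L M : Kˣ) (u v w : Expo) :
    chi P Q L M (u + v) w = chi P Q L M u w * chi P Q L M v w := by
  simp only [chi, Prod.fst_add, Prod.snd_add, add_mul, neg_add, zpow_add]
  ac_rfl

lemma chi_add_right (P Q L M : Kˣ) (u v w : Expo) :
    chi P Q L M u (v + w) = chi P Q L M u v * chi P Q L M u w := by
  simp only [chi, Prod.fst_add, Prod.snd_add, mul_add, neg_add, zpow_add]
  ac_rfl

/-- The quantum torus spanned by the Laurent monomials `z^j x^m s^k t^l`. -/
def QTorus (_P _Q _L _M : Kˣ) : Type _ := Expo →₀ K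

namespace QTorus

variable {P Q L M : Kˣ}

instance : AddCommGroup (QTorus P Q L M) := inferInstanceAs (AddCommGroup (Expo →₀ K))
instance : Module K (QTorus P Q L M) := inferInstanceAs (Module K (Expo →₀ K))

/-- The coefficient function of an element of the quantum torus. -/
def coeff : QTorus P Q L M ≃ₗ[K] (Expo →₀ K) := LinearEquiv.refl K (Expo →₀ K)

/-- The Laurent monomial with exponent `v`. -/
def E (v : Expo) : QTorus P Q L M := coeff.symm (Finsupp.single v 1)

variable (P Q L M) in
/-- The twisted product, as a bilinear map on coefficient functions. -/
def mulL : (Expo →₀ K) →ₗ[K] (Expo →₀ K) →ₗ[K] (Expo →₀ K) :=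
  Finsupp.linearCombination K fun v =>
    Finsupp.lsum K fun w => (chi P Q L M v w : K) • Finsupp.lsingle (v + w)

lemma mulL_single (v w : Expo) (a b : K) :
    mulL P Q L M (Finsupp.single v a) (Finsupp.single w b) =
      Finsupp.single (v + w) (a * b * (chi P Q L M v w : K)) := by
  simp only [mulL, Finsupp.linearCombination_single, LinearMap.smul_apply, Finsupp.lsum_single,
    Finsupp.lsingle_apply, Finsupp.smul_single, smul_eq_mul]
  congr 1
  ring

lemma mulL_assoc (f g h : Expo →₀ K) :
    mulL P Q L M (mulL P Q L M f g) h = mulL P Q L M f (mulL P Q L M g h) := by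
  induction f using Finsupp.induction_linear with
  | zero => simp
  | add f₁ f₂ h₁ h₂ => simp only [map_add, LinearMap.add_apply, h₁, h₂]
  | single u a =>
    induction g using Finsupp.induction_linear with
    | zero => simp
    | add f₁ f₂ h₁ h₂ => simp only [map_add, LinearMap.add_apply, h₁, h₂]
    | single v b =>
      induction h using Finsupp.induction_linear with
      | zero => simp
      | add f₁ f₂ h₁ h₂ => simp only [map_add, h₁, h₂]
      | single w c =>
        simp only [mulL_single, chi_add_left, chi_add_right, add_assoc, Units.val_mul]
        congr 1
        ring

lemma mulL_one (f : Expo →₀ K) : mulL P Q L M f (Finsupp.single 0 1) = f := by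
  induction f using Finsupp.induction_linear with
  | zero => simp
  | add f₁ f₂ h₁ h₂ => simp only [map_add, LinearMap.add_apply, h₁, h₂]
  | single u a => simp [mulL_single, chi]

lemma one_mulL (f : Expo →₀ K) : mulL P Q L M (Finsupp.single 0 1) f = f := by
  induction f using Finsupp.induction_linear with
  | zero => simp
  | add f₁ f₂ h₁ h₂ => simp only [map_add, h₁, h₂]
  | single u a => simp [mulL_single, chi]

instance : Ring (QTorus P Q L M) :=
  { (inferInstance : AddCommGroup (QTorus P Q L M)) with
    mul := fun f g => coeff.symm (mulL P Q L M (coeff f) (coeff g))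
    one := E 0
    left_distrib := fun f g h => map_add (mulL P Q L M f) g h
    right_distrib := fun f g h => LinearMap.map_add₂ (mulL P Q L M) f g h
    zero_mul := fun f => LinearMap.map_zero₂ (mulL P Q L M) f
    mul_zero := fun f => map_zero (mulL P Q L M f)
    mul_assoc := fun f g h => mulL_assoc f g h
    one_mul := fun f => one_mulL f
    mul_one := fun f => mulL_one f }

instance : Algebra K (QTorus P Q L M) :=
  Algebra.ofModule (fun r f g => LinearMap.map_smul₂ (mulL P Q L M) r f g)
    (fun r f g => map_smul (mulL P Q L M f) r g)

lemma one_eq : (1 : QTorus P Q L M) = E 0 := rfl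

lemma coeff_mul (f g : QTorus P Q L M) :
    coeff (f * g) = mulL P Q L M (coeff f) (coeff g) := rfl

lemma coeff_E (v : Expo) : coeff (E v : QTorus P Q L M) = Finsupp.single v 1 := rfl

lemma E_mul_E (v w : Expo) :
    (E v * E w : QTorus P Q L M) = (chi P Q L M v w : K) • E (v + w) := by
  apply coeff.injective
  rw [coeff_mul, coeff_E, coeff_E, mulL_single, map_smul, coeff_E]
  simp

lemma coeff_mul_apply (f g : QTorus P Q L M) (x : Expo) :
    coeff (f * g) x = ∑ v ∈ (coeff f).support, ∑ w ∈ (coeff g).support,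
      if v + w = x then coeff f v * coeff g w * (chi P Q L M v w : K) else 0 := by
  rw [coeff_mul]
  conv_lhs => rw [← Finsupp.sum_single (coeff f), ← Finsupp.sum_single (coeff g)]
  simp only [Finsupp.sum, map_sum, LinearMap.sum_apply, mulL_single, Finsupp.finsetSum_apply,
    Finsupp.single_apply]
  rw [Finset.sum_comm]

lemma coeff_mul_E (f : QTorus P Q L M) (v x : Expo) :
    coeff (f * E v) (x + v) = coeff f x * (chi P Q L M x v : K) := by
  rw [coeff_mul, coeff_E]
  generalize coeff f = f
  induction f using Finsupp.induction_linear with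
  | zero => simp
  | add f₁ f₂ h₁ h₂ =>
    simp only [map_add, LinearMap.add_apply, Finsupp.add_apply, h₁, h₂, add_mul]
  | single u a =>
    rw [mulL_single, Finsupp.single_apply, Finsupp.single_apply]
    by_cases h : u = x
    · subst h; simp
    · simp [h]

lemma coeff_E_mul (f : QTorus P Q L M) (v x : Expo) :
    coeff (E v * f) (x + v) = coeff f x * (chi P Q L M v x : K) := by
  rw [coeff_mul, coeff_E]
  generalize coeff f = f
  induction f using Finsupp.induction_linear with
  | zero => simp
  | add f₁ f₂ h₁ h₂ =>
    simp only [map_add, Finsupp.add_apply, h₁, h₂, add_mul]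
  | single u a =>
    rw [mulL_single, Finsupp.single_apply, Finsupp.single_apply, add_comm v u]
    by_cases h : u = x
    · subst h; simp
    · simp [h]

/-! ### Leading terms -/

/-- Exponents with the lexicographic order. -/
abbrev LexExpo : Type := ℤ ×ₗ ℤ ×ₗ ℤ ×ₗ ℤ

/-- The identity, from exponents to lexicographically ordered exponents. -/
def ord : Expo →+ LexExpo where
  toFun w := toLex (w.1, toLex (w.2.1, toLex w.2.2))
  map_zero' := rfl
  map_add' _ _ := rfl

lemma ord_injective : Function.Injective ord := fun _ _ h => h

/-- The product of the leading terms of `f` and `g` is not cancelled in `f * g`. The order enters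
through an injective homomorphism `o`, so that `-ord` gives the same for trailing terms. -/
lemma exists_top (o : Expo →+ LexExpo) (ho : Function.Injective o) {f g : QTorus P Q L M}
    (hf : f ≠ 0) (hg : g ≠ 0) :
    ∃ u v, coeff f u ≠ 0 ∧ coeff g v ≠ 0 ∧ (∀ u', coeff f u' ≠ 0 → o u' ≤ o u) ∧
      (∀ v', coeff g v' ≠ 0 → o v' ≤ o v) ∧ coeff (f * g) (u + v) ≠ 0 := by
  have hf' : (coeff f).support.Nonempty := by
    rw [Finsupp.support_nonempty_iff]; simpa using hf
  have hg' : (coeff g).support.Nonempty := by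
    rw [Finsupp.support_nonempty_iff]; simpa using hg
  obtain ⟨u, hu, hu'⟩ := Finset.exists_max_image _ o hf'
  obtain ⟨v, hv, hv'⟩ := Finset.exists_max_image _ o hg'
  refine ⟨u, v, by simpa using hu, by simpa using hv, fun u' h => hu' u' (by simpa using h),
    fun v' h => hv' v' (by simpa using h), ?_⟩
  rw [coeff_mul_apply, Finset.sum_eq_single u, Finset.sum_eq_single v]
  · rw [if_pos rfl]
    rw [Finsupp.mem_support_iff] at hu hv
    exact mul_ne_zero (mul_ne_zero hu hv) (Units.ne_zero _)
  · intro w _ hw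
    rw [if_neg]
    simpa using hw
  · exact fun h => absurd hv h
  · intro u₁ hu₁ hne
    refine Finset.sum_eq_zero fun v₁ hv₁ => if_neg fun h => ?_
    have h1 : o u₁ < o u := lt_of_le_of_ne (hu' _ hu₁) fun h => hne (ho h)
    have h2 := add_lt_add_of_lt_of_le h1 (hv' _ hv₁)
    rw [← map_add, ← map_add, h] at h2
    exact lt_irrefl _ h2
  · exact fun h => absurd hu h

lemma le_of_mul_E_eq (o : Expo →+ LexExpo) (ho : Function.Injective o) {f g : QTorus P Q L M}
    {v : Expo} (hf : f ≠ 0) (h : f * E v = g * f) (u' : Expo) (hu' : coeff g u' ≠ 0) :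
    o u' ≤ o v := by
  have hg : g ≠ 0 := by rintro rfl; simp at hu'
  obtain ⟨u, w, hu, hw, hu1, hw1, h1⟩ := exists_top o ho hg hf
  rw [← h, show u + w = (u + w - v) + v by abel, coeff_mul_E] at h1
  have h2 := hw1 _ (left_ne_zero_of_mul h1)
  rw [map_sub, map_add] at h2
  have h3 : o u ≤ o v := by
    rw [sub_le_iff_le_add, add_comm (o w)] at h2
    exact le_of_add_le_add_right h2
  exact (hu1 _ hu').trans h3

/-- If `f·E v = g·f` with `f ≠ 0`, then comparing leading and trailing terms, `g` is a multiple of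
`E v`; so any two exponents of `f` have the same commutation factor with `v`. -/
lemma chi_eq_of_mul_E_eq {f g : QTorus P Q L M} {v : Expo} (h : f * E v = g * f)
    {w w' : Expo} (hw : coeff f w ≠ 0) (hw' : coeff f w' ≠ 0) :
    chi P Q L M w v * chi P Q L M v w' = chi P Q L M w' v * chi P Q L M v w := by
  have hf : f ≠ 0 := by rintro rfl; simp at hw
  have hg : g = coeff g v • E v := by
    apply coeff.injective
    ext u
    rw [map_smul, coeff_E, Finsupp.smul_apply, Finsupp.single_apply]
    by_cases hu : coeff g u = 0
    · split_ifs with h'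
      · subst h'; simp
      · simp [hu]
    · have h1 := le_of_mul_E_eq ord ord_injective hf h u hu
      have h2 := le_of_mul_E_eq (-ord) (neg_injective.comp ord_injective) hf h u hu
      have h3 : v = u := ord_injective (le_antisymm (by simpa using h2) h1)
      subst h3; simp
  set c := coeff g v
  have key : ∀ x, coeff f x ≠ 0 → (chi P Q L M x v : K) = c * chi P Q L M v x := by
    intro x hx
    have h1 := coeff_mul_E f v x
    rw [h, hg, smul_mul_assoc, map_smul, Finsupp.smul_apply, coeff_E_mul, smul_eq_mul] at h1
    apply mul_left_cancel₀ hx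
    rw [← h1]; ring
  ext
  rw [Units.val_mul, Units.val_mul, key w hw, key w' hw']
  ring

/-! ### Scalar multiples of monomials -/

/-- `f` is a nonzero scalar multiple of the monomial with exponent `w`. -/
def IsMono (f : QTorus P Q L M) (w : Expo) : Prop := ∃ c : K, c ≠ 0 ∧ f = c • E w

lemma E_isMono (w : Expo) : IsMono (E w : QTorus P Q L M) w := ⟨1, one_ne_zero, by simp⟩

lemma IsMono.mul {f g : QTorus P Q L M} {v w : Expo} (hf : IsMono f v) (hg : IsMono g w) :
    IsMono (f * g) (v + w) := by
  obtain ⟨a, ha, rfl⟩ := hf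
  obtain ⟨b, hb, rfl⟩ := hg
  refine ⟨a * b * chi P Q L M v w, mul_ne_zero (mul_ne_zero ha hb) (Units.ne_zero _), ?_⟩
  rw [smul_mul_smul_comm, E_mul_E, smul_smul]

lemma IsMono.smul {f : QTorus P Q L M} {v : Expo} (hf : IsMono f v) {c : K} (hc : c ≠ 0) :
    IsMono (c • f) v := by
  obtain ⟨a, ha, rfl⟩ := hf
  exact ⟨c * a, mul_ne_zero hc ha, by rw [smul_smul]⟩

lemma IsMono.pow {f : QTorus P Q L M} {v : Expo} (hf : IsMono f v) (n : ℕ) :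
    IsMono (f ^ n) (n • v) := by
  induction n with
  | zero => simpa [one_eq] using E_isMono (P := P) (Q := Q) (L := L) (M := M) 0
  | succ n ih => rw [pow_succ, succ_nsmul]; exact ih.mul hf

lemma IsMono.unique {f : QTorus P Q L M} {v w : Expo} (hf : IsMono f v) (hg : IsMono f w) :
    v = w := by
  obtain ⟨a, ha, rfl⟩ := hf
  obtain ⟨b, hb, h⟩ := hg
  have := congrArg (fun x => coeff x v) h
  simp only [map_smul, coeff_E, Finsupp.smul_apply, Finsupp.single_apply, smul_eq_mul] at this
  by_contra hne
  rw [if_neg (Ne.symm hne)] at this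
  simp [ha] at this

lemma IsMono.chi_eq {f g : QTorus P Q L M} {v w : Expo} (hf : IsMono f v) (hg : IsMono g w)
    {r : Kˣ} (h : f * g = (r : K) • (g * f)) :
    chi P Q L M v w = r * chi P Q L M w v := by
  obtain ⟨a, ha, rfl⟩ := hf
  obtain ⟨b, hb, rfl⟩ := hg
  rw [smul_mul_smul_comm, smul_mul_smul_comm, E_mul_E, E_mul_E, add_comm w v] at h
  have := congrArg (fun x => coeff x (v + w)) h
  simp only [map_smul, coeff_E, Finsupp.smul_apply, Finsupp.single_apply, smul_eq_mul, if_true]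
    at this
  ext
  rw [Units.val_mul]
  apply mul_left_cancel₀ (mul_ne_zero ha hb)
  linear_combination this

/-- If `f` commutes with a monomial up to the factor `r`, then so do all its terms. -/
lemma chi_eq_of_comm {f g : QTorus P Q L M} {v : Expo} (hg : IsMono g v)
    {r : Kˣ} (h : f * g = (r : K) • (g * f)) {w : Expo} (hw : coeff f w ≠ 0) :
    chi P Q L M w v = r * chi P Q L M v w := by
  obtain ⟨b, hb, rfl⟩ := hg
  have := congrArg (fun x => coeff x (w + v)) h
  simp only [map_smul, mul_smul_comm, smul_mul_assoc, Finsupp.smul_apply, smul_eq_mul,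
    coeff_E_mul, coeff_mul_E] at this
  ext
  rw [Units.val_mul]
  apply mul_left_cancel₀ (mul_ne_zero hb hw)
  linear_combination this

/-- The value at `z = 1` of the coefficient of each `x^m s^k t^l`. -/
def eps : QTorus P Q L M →ₗ[K] (ℤ × ℤ × ℤ →₀ K) :=
  Finsupp.lmapDomain K K Prod.snd ∘ₗ coeff.toLinearMap

lemma eps_E (v : Expo) : eps (E v : QTorus P Q L M) = Finsupp.single v.2 1 := by
  simp [eps, coeff_E, Finsupp.mapDomain_single]

end QTorus

end QuantumTorus

section Algebra

variable {K p q lam mu}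

/-! ### Relations, generators and the universal property -/

lemma rel_weyl : wx K p q lam mu * wy K p q lam mu =
    p • (wy K p q lam mu * wx K p q lam mu) + 1 := by
  have h := RingQuot.mkAlgHom_rel K (ExtWeylRel.weyl (K := K) (p := p) (q := q) (lam := lam)
    (mu := mu))
  simp only [map_sub, map_mul, map_smul, map_one] at h
  exact sub_eq_iff_eq_add'.mp h

lemma rel_st : ws K p q lam mu * wt K p q lam mu =
    q • (wt K p q lam mu * ws K p q lam mu) := by
  have h := RingQuot.mkAlgHom_rel K (ExtWeylRel.st (K := K) (p := p) (q := q) (lam := lam)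
    (mu := mu))
  simp only [map_mul, map_smul] at h
  exact h

lemma rel_sx : ws K p q lam mu * wx K p q lam mu =
    lam • (wx K p q lam mu * ws K p q lam mu) := by
  have h := RingQuot.mkAlgHom_rel K (ExtWeylRel.sx (K := K) (p := p) (q := q) (lam := lam)
    (mu := mu))
  simp only [map_mul, map_smul] at h
  exact h

lemma rel_sy : ws K p q lam mu * wy K p q lam mu =
    lam⁻¹ • (wy K p q lam mu * ws K p q lam mu) := by
  have h := RingQuot.mkAlgHom_rel K (ExtWeylRel.sy (K := K) (p := p) (q := q) (lam := lam)
    (mu := mu))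
  simp only [map_mul, map_smul] at h
  exact h

lemma rel_tx : wt K p q lam mu * wx K p q lam mu =
    mu • (wx K p q lam mu * wt K p q lam mu) := by
  have h := RingQuot.mkAlgHom_rel K (ExtWeylRel.tx (K := K) (p := p) (q := q) (lam := lam)
    (mu := mu))
  simp only [map_mul, map_smul] at h
  exact h

lemma rel_ty : wt K p q lam mu * wy K p q lam mu =
    mu⁻¹ • (wy K p q lam mu * wt K p q lam mu) := by
  have h := RingQuot.mkAlgHom_rel K (ExtWeylRel.ty (K := K) (p := p) (q := q) (lam := lam)
    (mu := mu))
  simp only [map_mul, map_smul] at h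
  exact h

lemma wz_eq_s7 : wz K p q lam mu = (p - 1) • (wy K p q lam mu * wx K p q lam mu) + 1 := by
  rw [wz, rel_weyl]; module

lemma rel_xz : wx K p q lam mu * wz K p q lam mu =
    p • (wz K p q lam mu * wx K p q lam mu) := by
  rw [wz_eq_s7]
  simp only [mul_add, add_mul, mul_smul_comm, smul_mul_assoc, mul_one, one_mul]
  rw [← mul_assoc, rel_weyl]
  simp only [add_mul, smul_mul_assoc, one_mul]
  module

lemma rel_zy : wz K p q lam mu * wy K p q lam mu =
    p • (wy K p q lam mu * wz K p q lam mu) := by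
  rw [wz_eq_s7]
  simp only [mul_add, add_mul, mul_smul_comm, smul_mul_assoc, mul_one, one_mul, mul_assoc]
  rw [rel_weyl]
  simp only [mul_add, mul_smul_comm, mul_one]
  module

lemma rel_sz (hlam : lam ≠ 0) : ws K p q lam mu * wz K p q lam mu =
    wz K p q lam mu * ws K p q lam mu := by
  rw [wz_eq_s7]
  simp only [mul_add, add_mul, mul_smul_comm, smul_mul_assoc, mul_one, one_mul]
  rw [← mul_assoc, rel_sy, smul_mul_assoc, mul_assoc, rel_sx, mul_smul_comm,
    inv_smul_smul₀ hlam, mul_assoc]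

lemma rel_tz (hmu : mu ≠ 0) : wt K p q lam mu * wz K p q lam mu =
    wz K p q lam mu * wt K p q lam mu := by
  rw [wz_eq_s7]
  simp only [mul_add, add_mul, mul_smul_comm, smul_mul_assoc, mul_one, one_mul]
  rw [← mul_assoc, rel_ty, smul_mul_assoc, mul_assoc, rel_tx, mul_smul_comm,
    inv_smul_smul₀ hmu, mul_assoc]

/-- A property closed under the algebra operations holds everywhere once it holds for the
generators. -/
lemma gen_induction {C : ExtWeyl K p q lam mu → Prop}
    (hs : ∀ r : K, C (algebraMap K _ r)) (hx : C (wx K p q lam mu)) (hy : C (wy K p q lam mu))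
    (hS : C (ws K p q lam mu)) (ht : C (wt K p q lam mu))
    (hmul : ∀ a b, C a → C b → C (a * b)) (hadd : ∀ a b, C a → C b → C (a + b))
    (a : ExtWeyl K p q lam mu) : C a := by
  obtain ⟨a, rfl⟩ := RingQuot.mkAlgHom_surjective K (ExtWeylRel K p q lam mu) a
  induction a using FreeAlgebra.induction with
  | grade0 r => rw [AlgHom.commutes]; exact hs r
  | grade1 i => fin_cases i <;> assumption
  | mul a b ha hb => rw [map_mul]; exact hmul _ _ ha hb
  | add a b ha hb => rw [map_add]; exact hadd _ _ ha hb

lemma algHom_ext_gen {B : Type*} [Ring B] [Algebra K B] {f g : ExtWeyl K p q lam mu →ₐ[K] B}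
    (hx : f (wx K p q lam mu) = g (wx K p q lam mu))
    (hy : f (wy K p q lam mu) = g (wy K p q lam mu))
    (hs : f (ws K p q lam mu) = g (ws K p q lam mu))
    (ht : f (wt K p q lam mu) = g (wt K p q lam mu)) : f = g := by
  refine AlgHom.ext fun a => ?_
  refine gen_induction (C := fun a => f a = g a) ?_ hx hy hs ht ?_ ?_ a
  · intro r; rw [AlgHom.commutes, AlgHom.commutes]
  · intro a b ha hb; rw [map_mul, map_mul, ha, hb]
  · intro a b ha hb; rw [map_add, map_add, ha, hb]

lemma exists_lift {B : Type*} [Ring B] [Algebra K B] (x y s t : B)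
    (h1 : x * y - p • (y * x) = 1) (h2 : s * t = q • (t * s)) (h3 : s * x = lam • (x * s))
    (h4 : s * y = lam⁻¹ • (y * s)) (h5 : t * x = mu • (x * t)) (h6 : t * y = mu⁻¹ • (y * t)) :
    ∃ f : ExtWeyl K p q lam mu →ₐ[K] B, f (wx K p q lam mu) = x ∧ f (wy K p q lam mu) = y ∧
      f (ws K p q lam mu) = s ∧ f (wt K p q lam mu) = t := by
  refine ⟨RingQuot.liftAlgHom K ⟨FreeAlgebra.lift K ![x, y, s, t], ?_⟩, ?_, ?_, ?_, ?_⟩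
  · intro a b h
    cases h <;> simpa
  all_goals simp [wx, wy, ws, wt]

/-! ### Spanning by ordered monomials -/

/-- The ordered monomial `y^i x^j s^k t^l`. -/
def pbw (n : ℕ × ℕ × ℕ × ℕ) : ExtWeyl K p q lam mu :=
  wy K p q lam mu ^ n.1 * (wx K p q lam mu ^ n.2.1 * (ws K p q lam mu ^ n.2.2.1 *
    wt K p q lam mu ^ n.2.2.2))

lemma qcomm_pow {B : Type*} [Ring B] [Algebra K B] {a b : B} {c : K} (h : a * b = c • (b * a))
    (n : ℕ) : a * b ^ n = c ^ n • (b ^ n * a) := by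
  induction n with
  | zero => simp
  | succ n ih =>
    rw [pow_succ, ← mul_assoc, ih, smul_mul_assoc, mul_assoc, h, mul_smul_comm, smul_smul,
      pow_succ, mul_assoc]

lemma x_mul_y_pow (i : ℕ) : ∃ c : K, wx K p q lam mu * wy K p q lam mu ^ (i + 1) =
    p ^ (i + 1) • (wy K p q lam mu ^ (i + 1) * wx K p q lam mu) + c • wy K p q lam mu ^ i := by
  induction i with
  | zero => exact ⟨1, by simp [rel_weyl]⟩
  | succ i ih =>
    obtain ⟨c, hc⟩ := ih
    refine ⟨p ^ (i + 1) + c, ?_⟩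
    rw [pow_succ _ (i + 1), ← mul_assoc, hc, add_mul, smul_mul_assoc, mul_assoc, rel_weyl]
    simp only [mul_add, mul_smul_comm, mul_one, smul_mul_assoc, ← mul_assoc, ← pow_succ]
    module

lemma span_pbw (hq : q ≠ 0) : Submodule.span K (Set.range (pbw (K := K) (p := p) (q := q) (lam := lam)
    (mu := mu))) = ⊤ := by
  set S := Submodule.span K (Set.range (pbw (K := K) (p := p) (q := q) (lam := lam)
    (mu := mu))) with hS
  have hmem : ∀ n, pbw n ∈ S := fun n => Submodule.subset_span ⟨n, rfl⟩
  have red : ∀ a : ExtWeyl K p q lam mu, (∀ n, a * pbw n ∈ S) → ∀ b ∈ S, a * b ∈ S := by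
    intro a ha b hb
    induction hb using Submodule.span_induction with
    | mem b hb => obtain ⟨n, rfl⟩ := hb; exact ha n
    | zero => simp
    | add b c _ _ hb hc => rw [mul_add]; exact S.add_mem hb hc
    | smul r b _ hb => rw [mul_smul_comm]; exact S.smul_mem _ hb
  have key : ∀ a : ExtWeyl K p q lam mu, ∀ b ∈ S, a * b ∈ S := by
    intro a
    refine gen_induction (C := fun a => ∀ b ∈ S, a * b ∈ S) ?_ ?_ ?_ ?_ ?_ ?_ ?_ a
    · intro r b hb
      rw [← Algebra.smul_def]
      exact S.smul_mem _ hb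
    · apply red
      rintro ⟨i, j, k, l⟩
      cases i with
      | zero =>
        convert hmem (0, j + 1, k, l) using 1
        simp only [pbw, pow_zero, one_mul, pow_succ', mul_assoc]
      | succ i =>
        obtain ⟨c, hc⟩ := x_mul_y_pow (K := K) (p := p) (q := q) (lam := lam) (mu := mu) i
        have : wx K p q lam mu * pbw (i + 1, j, k, l) =
            p ^ (i + 1) • pbw (i + 1, j + 1, k, l) + c • pbw (i, j, k, l) := by
          simp only [pbw]
          rw [← mul_assoc, hc, add_mul, smul_mul_assoc, smul_mul_assoc, pow_succ' _ j]
          simp only [mul_assoc]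
        rw [this]
        exact S.add_mem (S.smul_mem _ (hmem _)) (S.smul_mem _ (hmem _))
    · apply red
      rintro ⟨i, j, k, l⟩
      convert hmem (i + 1, j, k, l) using 1
      simp only [pbw, pow_succ', mul_assoc]
    · apply red
      rintro ⟨i, j, k, l⟩
      have : ws K p q lam mu * pbw (i, j, k, l) =
          (lam⁻¹ ^ i * lam ^ j) • pbw (i, j, k + 1, l) := by
        simp only [pbw]
        rw [← mul_assoc, qcomm_pow rel_sy, smul_mul_assoc, mul_assoc, ← mul_assoc (ws K p q lam mu),
          qcomm_pow rel_sx, smul_mul_assoc, mul_smul_comm, smul_smul, pow_succ']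
        simp only [mul_assoc]
      rw [this]
      exact S.smul_mem _ (hmem _)
    · apply red
      rintro ⟨i, j, k, l⟩
      have hts : wt K p q lam mu * ws K p q lam mu =
          q⁻¹ • (ws K p q lam mu * wt K p q lam mu) := by
        rw [rel_st, smul_smul, inv_mul_cancel₀ hq, one_smul]
      have : wt K p q lam mu * pbw (i, j, k, l) =
          (mu⁻¹ ^ i * mu ^ j * q⁻¹ ^ k) • pbw (i, j, k, l + 1) := by
        simp only [pbw]
        rw [← mul_assoc, qcomm_pow rel_ty, smul_mul_assoc, mul_assoc, ← mul_assoc (wt K p q lam mu),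
          qcomm_pow rel_tx, smul_mul_assoc, mul_smul_comm, smul_smul, pow_succ',
          mul_assoc (wx K p q lam mu ^ j), ← mul_assoc (wt K p q lam mu), qcomm_pow hts,
          smul_mul_assoc, mul_smul_comm, mul_smul_comm, smul_smul]
        simp only [mul_assoc]
      rw [this]
      exact S.smul_mem _ (hmem _)
    · intro a b ha hb c hc
      rw [mul_assoc]; exact ha _ (hb _ hc)
    · intro a b ha hb c hc
      rw [add_mul]; exact S.add_mem (ha _ hc) (hb _ hc)
  rw [eq_top_iff]
  intro a _
  have := key a 1 (by simpa [pbw] using hmem 0)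
  simpa using this

/-! ### Normal elements `z`, `s`, `t` -/

lemma normal_of_gen {n : ExtWeyl K p q lam mu} (hx : ∃ b, n * wx K p q lam mu = b * n)
    (hy : ∃ b, n * wy K p q lam mu = b * n) (hs : ∃ b, n * ws K p q lam mu = b * n)
    (ht : ∃ b, n * wt K p q lam mu = b * n) (a : ExtWeyl K p q lam mu) : ∃ b, n * a = b * n := by
  refine gen_induction (C := fun a => ∃ b, n * a = b * n) ?_ hx hy hs ht ?_ ?_ a
  · exact fun r => ⟨_, (Algebra.commutes r n).symm⟩
  · rintro a b ⟨c, hc⟩ ⟨d, hd⟩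
    exact ⟨c * d, by rw [← mul_assoc, hc, mul_assoc, hd, mul_assoc]⟩
  · rintro a b ⟨c, hc⟩ ⟨d, hd⟩
    exact ⟨c + d, by rw [mul_add, hc, hd, add_mul]⟩

lemma normal_z (hp : p ≠ 0) (hlam : lam ≠ 0) (hmu : mu ≠ 0) (a : ExtWeyl K p q lam mu) :
    ∃ b, wz K p q lam mu * a = b * wz K p q lam mu := by
  refine normal_of_gen ⟨p⁻¹ • wx K p q lam mu, ?_⟩ ⟨p • wy K p q lam mu, ?_⟩
    ⟨ws K p q lam mu, (rel_sz hlam).symm⟩ ⟨wt K p q lam mu, (rel_tz hmu).symm⟩ a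
  · rw [smul_mul_assoc, rel_xz, smul_smul, inv_mul_cancel₀ hp, one_smul]
  · rw [smul_mul_assoc, rel_zy]

lemma normal_s (a : ExtWeyl K p q lam mu) :
    ∃ b, ws K p q lam mu * a = b * ws K p q lam mu :=
  normal_of_gen ⟨lam • wx K p q lam mu, by rw [smul_mul_assoc, rel_sx]⟩
    ⟨lam⁻¹ • wy K p q lam mu, by rw [smul_mul_assoc, rel_sy]⟩ ⟨_, rfl⟩
    ⟨q • wt K p q lam mu, by rw [smul_mul_assoc, rel_st]⟩ a

lemma normal_t (hq : q ≠ 0) (a : ExtWeyl K p q lam mu) :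
    ∃ b, wt K p q lam mu * a = b * wt K p q lam mu :=
  normal_of_gen ⟨mu • wx K p q lam mu, by rw [smul_mul_assoc, rel_tx]⟩
    ⟨mu⁻¹ • wy K p q lam mu, by rw [smul_mul_assoc, rel_ty]⟩
    ⟨q⁻¹ • ws K p q lam mu, by
      rw [smul_mul_assoc, rel_st, smul_smul, inv_mul_cancel₀ hq, one_smul]⟩ ⟨_, rfl⟩ a

end Algebra

section Embedding

open QTorus

variable {K} {P Q L M : Kˣ}

/-! ### The embedding into the quantum torus -/

/-- The image `(p - 1)⁻¹ (z - 1) x⁻¹` of `y` in the quantum torus. -/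
def torusY : QTorus P Q L M := ((P : K) - 1)⁻¹ • (E (1, -1, 0, 0) - E (0, -1, 0, 0))

/-- `π` is the homomorphism to the quantum torus with `x ↦ x`, `y ↦ (p - 1)⁻¹ (z - 1) x⁻¹`, `s ↦ s`,
`t ↦ t`. -/
structure IsEmb (π : ExtWeyl K (P : K) (Q : K) (L : K) (M : K) →ₐ[K] QTorus P Q L M) : Prop where
  x : π (wx K P Q L M) = E (0, 1, 0, 0)
  y : π (wy K P Q L M) = torusY
  s : π (ws K P Q L M) = E (0, 0, 1, 0)
  t : π (wt K P Q L M) = E (0, 0, 0, 1)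

lemma exists_isEmb (hP : (P : K) - 1 ≠ 0) :
    ∃ π : ExtWeyl K (P : K) (Q : K) (L : K) (M : K) →ₐ[K] QTorus P Q L M, IsEmb π := by
  obtain ⟨f, h1, h2, h3, h4⟩ := exists_lift (K := K) (p := P) (q := Q) (lam := L) (mu := M)
    (B := QTorus P Q L M) (E (0, 1, 0, 0)) torusY (E (0, 0, 1, 0)) (E (0, 0, 0, 1))
    (by
      simp only [torusY, mul_smul_comm, smul_mul_assoc, mul_sub, sub_mul, E_mul_E, chi, one_eq]
      simp
      match_scalars
      · field_simp
        ring
      · field_simp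
        ring)
    (by simp [E_mul_E, chi])
    (by simp [E_mul_E, chi])
    (by
      simp only [torusY, mul_smul_comm, smul_mul_assoc, mul_sub, sub_mul, E_mul_E, chi]
      simp
      module)
    (by simp [E_mul_E, chi])
    (by
      simp only [torusY, mul_smul_comm, smul_mul_assoc, mul_sub, sub_mul, E_mul_E, chi]
      simp
      module)
  exact ⟨f, h1, h2, h3, h4⟩

namespace IsEmb

variable {π : ExtWeyl K (P : K) (Q : K) (L : K) (M : K) →ₐ[K] QTorus P Q L M}

lemma z (hπ : IsEmb π) (hP : (P : K) - 1 ≠ 0) : π (wz K P Q L M) = E (1, 0, 0, 0) := by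
  rw [wz_eq_s7, map_add, map_smul, map_mul, hπ.x, hπ.y, map_one]
  simp only [torusY, smul_mul_assoc, sub_mul, E_mul_E, chi, one_eq]
  rw [show (0 : Expo) = (0, 0, 0, 0) from rfl]
  simp
  match_scalars
  · field_simp
  · field_simp
    ring

end IsEmb

lemma coeff_torusY_mul (f : QTorus P Q L M) (w : Expo) :
    coeff (torusY * f) w = ((P : K) - 1)⁻¹ *
      (coeff f (w - (1, -1, 0, 0)) * chi P Q L M (1, -1, 0, 0) (w - (1, -1, 0, 0)) -
        coeff f (w - (0, -1, 0, 0)) * chi P Q L M (0, -1, 0, 0) (w - (0, -1, 0, 0))) := by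
  rw [← coeff_E_mul, ← coeff_E_mul, sub_add_cancel, sub_add_cancel, torusY, smul_mul_assoc,
    sub_mul, map_smul, map_sub]
  rfl

/-- Left multiples of `y` are divisible by `z - 1`. -/
lemma eps_torusY_mul (f : QTorus P Q L M) : eps (torusY * f) = 0 := by
  obtain ⟨f, rfl⟩ := coeff.symm.surjective f
  induction f using Finsupp.induction_linear with
  | zero => simp
  | add f₁ f₂ h₁ h₂ => rw [map_add, mul_add, map_add, h₁, h₂, add_zero]
  | single v a =>
    have : (coeff.symm (Finsupp.single v a) : QTorus P Q L M) = a • E v := by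
      rw [E, ← map_smul, Finsupp.smul_single, smul_eq_mul, mul_one]
    rw [this, mul_smul_comm, map_smul, torusY, smul_mul_assoc, map_smul, sub_mul, E_mul_E,
      E_mul_E, map_sub, map_smul, map_smul, eps_E, eps_E]
    simp [chi]

namespace IsEmb

variable {π : ExtWeyl K (P : K) (Q : K) (L : K) (M : K) →ₐ[K] QTorus P Q L M}

lemma isMono_pbw_zero (hπ : IsEmb π) (j k l : ℕ) :
    IsMono (π (pbw (0, j, k, l))) (0, (j : ℤ), (k : ℤ), (l : ℤ)) := by
  have h := ((E_isMono (P := P) (Q := Q) (L := L) (M := M) (0, 1, 0, 0)).pow j).mul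
    (((E_isMono (P := P) (Q := Q) (L := L) (M := M) (0, 0, 1, 0)).pow k).mul
    ((E_isMono (P := P) (Q := Q) (L := L) (M := M) (0, 0, 0, 1)).pow l))
  simp only [pbw, map_mul, map_pow, hπ.x, hπ.s, hπ.t, pow_zero, one_mul]
  simpa using h

lemma pbw_succ (hπ : IsEmb π) (i j k l : ℕ) :
    π (pbw (i + 1, j, k, l)) = torusY * π (pbw (i, j, k, l)) := by
  rw [← hπ.y, ← map_mul]
  simp only [pbw, pow_succ', mul_assoc]

/-- The image of `y^i x^j s^k t^l` is a polynomial in `z` of degree at most `i` times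
`x^(j-i) s^k t^l`. -/
lemma pbw_support (hπ : IsEmb π) (i j k l : ℕ) (w : Expo)
    (hw : coeff (π (pbw (i, j, k, l))) w ≠ 0) :
    0 ≤ w.1 ∧ w.1 ≤ i ∧ w.2 = ((j : ℤ) - i, (k : ℤ), (l : ℤ)) := by
  induction i generalizing w with
  | zero =>
    obtain ⟨c, hc, h⟩ := hπ.isMono_pbw_zero j k l
    rw [h, map_smul, coeff_E, Finsupp.smul_apply, Finsupp.single_apply] at hw
    have : w = (0, (j : ℤ), (k : ℤ), (l : ℤ)) := by
      by_contra hne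
      rw [if_neg (Ne.symm hne)] at hw
      simp at hw
    subst this
    simp
  | succ i ih =>
    rw [hπ.pbw_succ, coeff_torusY_mul] at hw
    obtain ⟨a, m, k', l'⟩ := w
    by_cases h1 : coeff (π (pbw (i, j, k, l))) ((a, m, k', l') - (1, -1, 0, 0)) = 0
    · by_cases h2 : coeff (π (pbw (i, j, k, l))) ((a, m, k', l') - (0, -1, 0, 0)) = 0
      · rw [h1, h2] at hw
        simp at hw
      · have := ih _ h2
        simp only [Prod.mk_sub_mk, Prod.mk.injEq] at this ⊢
        push_cast
        omega
    · have := ih _ h1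
      simp only [Prod.mk_sub_mk, Prod.mk.injEq] at this ⊢
      push_cast
      omega

/-- The image of `y^i x^j s^k t^l` has degree exactly `i` in `z`. -/
lemma pbw_top (hπ : IsEmb π) (hP : (P : K) - 1 ≠ 0) (i j k l : ℕ) :
    coeff (π (pbw (i, j, k, l))) ((i : ℤ), (j : ℤ) - i, (k : ℤ), (l : ℤ)) ≠ 0 := by
  induction i with
  | zero =>
    obtain ⟨c, hc, h⟩ := hπ.isMono_pbw_zero j k l
    rw [h, map_smul, coeff_E]
    simpa using hc
  | succ i ih =>
    rw [hπ.pbw_succ, coeff_torusY_mul]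
    have h2 : coeff (π (pbw (i, j, k, l)))
        ((((i + 1 : ℕ) : ℤ), (j : ℤ) - ((i + 1 : ℕ) : ℤ), (k : ℤ), (l : ℤ)) - (0, -1, 0, 0)) = 0 := by
      by_contra hne
      have := hπ.pbw_support _ _ _ _ _ hne
      simp only [Prod.mk_sub_mk, Prod.mk.injEq] at this
      omega
    have h1 : (((i + 1 : ℕ) : ℤ), (j : ℤ) - ((i + 1 : ℕ) : ℤ), (k : ℤ), (l : ℤ)) - (1, -1, 0, 0)
        = ((i : ℤ), (j : ℤ) - i, (k : ℤ), (l : ℤ)) := by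
      simp only [Prod.mk_sub_mk, Prod.mk.injEq]
      push_cast
      omega
    rw [h2, h1, zero_mul, sub_zero]
    exact mul_ne_zero (inv_ne_zero hP) (mul_ne_zero ih (Units.ne_zero _))

/-- The images of the ordered monomials have distinct leading exponents, so `π` is injective. -/
lemma injective (hπ : IsEmb π) (hP : (P : K) - 1 ≠ 0) : Function.Injective π := by
  rw [injective_iff_map_eq_zero]
  intro a ha
  have hmem : a ∈ Submodule.span K (Set.range (pbw (K := K) (p := P) (q := Q) (lam := L)
    (mu := M))) := by rw [span_pbw (Units.ne_zero Q)]; trivial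
  obtain ⟨c, rfl⟩ := Finsupp.mem_span_range_iff_exists_finsupp.mp hmem
  by_contra hne
  have hc : c.support.Nonempty := by
    rw [Finsupp.support_nonempty_iff]
    rintro rfl
    simp at hne
  obtain ⟨⟨i, j, k, l⟩, hn, hmax⟩ := Finset.exists_max_image c.support (fun n => n.1) hc
  have h := congrArg (fun f => coeff f ((i : ℤ), (j : ℤ) - i, (k : ℤ), (l : ℤ))) ha
  simp only [Finsupp.sum, map_sum, map_smul, Finsupp.finsetSum_apply, Finsupp.smul_apply,
    map_zero, Finsupp.zero_apply, smul_eq_mul] at h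
  rw [Finset.sum_eq_single (i, j, k, l)] at h
  · exact mul_ne_zero (Finsupp.mem_support_iff.mp hn) (hπ.pbw_top hP i j k l) h
  · rintro ⟨i', j', k', l'⟩ hn' hne'
    by_contra h0
    have h1 := hπ.pbw_support _ _ _ _ _ (right_ne_zero_of_mul h0)
    have h2 := hmax _ hn'
    apply hne'
    simp only [Prod.mk.injEq] at h1 h2 ⊢
    omega
  · exact fun h' => absurd hn h'

/-- Elements of the image have no negative powers of `z`, `s` or `t`. -/
lemma coeff_eq_zero (hπ : IsEmb π) (a : ExtWeyl K (P : K) (Q : K) (L : K) (M : K)) (w : Expo)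
    (hw : ¬ (0 ≤ w.1 ∧ 0 ≤ w.2.2.1 ∧ 0 ≤ w.2.2.2)) : coeff (π a) w = 0 := by
  have hmem : a ∈ Submodule.span K (Set.range (pbw (K := K) (p := P) (q := Q) (lam := L)
    (mu := M))) := by rw [span_pbw (Units.ne_zero Q)]; trivial
  induction hmem using Submodule.span_induction with
  | mem b hb =>
    obtain ⟨⟨i, j, k, l⟩, rfl⟩ := hb
    by_contra hne
    obtain ⟨h1, h2, h3⟩ := hπ.pbw_support _ _ _ _ _ hne
    apply hw
    rw [h3]
    simp [h1]
  | zero => simp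
  | add b c _ _ hb hc => simp [hb, hc]
  | smul r b _ hb => simp [hb]

/-- Elements of the image have coefficients divisible by `z - 1` in negative `x`-degree. -/
lemma eps_eq_zero (hπ : IsEmb π) (a : ExtWeyl K (P : K) (Q : K) (L : K) (M : K))
    (w : ℤ × ℤ × ℤ) (hw : w.1 < 0) : eps (π a) w = 0 := by
  have hmem : a ∈ Submodule.span K (Set.range (pbw (K := K) (p := P) (q := Q) (lam := L)
    (mu := M))) := by rw [span_pbw (Units.ne_zero Q)]; trivial
  induction hmem using Submodule.span_induction with
  | mem b hb =>
    obtain ⟨⟨i, j, k, l⟩, rfl⟩ := hb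
    cases i with
    | zero =>
      obtain ⟨c, hc, h⟩ := hπ.isMono_pbw_zero j k l
      rw [h, map_smul, eps_E, Finsupp.smul_apply, Finsupp.single_apply, if_neg, smul_zero]
      rintro rfl
      simp at hw
      omega
    | succ i => rw [hπ.pbw_succ, eps_torusY_mul]; rfl
  | zero => simp
  | add b c _ _ hb hc => simp [hb, hc]
  | smul r b _ hb => simp [hb]

end IsEmb

end Embedding

section Automorphisms

open QTorus

variable {K} {P Q L M : Kˣ}

/-! ### Normal elements are monomials in `z`, `s`, `t` -/

lemma zpow_inj_of_not_root {P : Kˣ} (h : ∀ n : ℕ, 0 < n → (P : K) ^ n ≠ 1) :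
    Function.Injective fun n : ℤ => P ^ n := by
  rw [injective_zpow_iff_not_isOfFinOrder, isOfFinOrder_iff_pow_eq_one]
  rintro ⟨n, hn, h1⟩
  exact h n hn (by rw [← Units.val_pow_eq_pow_val, h1, Units.val_one])

variable {π : ExtWeyl K (P : K) (Q : K) (L : K) (M : K) →ₐ[K] QTorus P Q L M}

/-- If `n` is normal, then each of `z`, `s`, `t`, `x` commutes with all terms of `n` up to one and
the same factor; as `p` and `q` are not roots of unity, `n` is a multiple of a single
`z^j x^m s^k t^l`. Conjugating `y` by it gives a multiple of
`(p^m z - 1) x⁻¹`, which lies in the algebra only if `p^m = 1`. -/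
lemma IsEmb.normal_isMono (hπ : IsEmb π) (hP1 : (P : K) - 1 ≠ 0)
    (hP : Function.Injective fun n : ℤ => P ^ n) (hQ : Function.Injective fun n : ℤ => Q ^ n)
    {n : ExtWeyl K (P : K) (Q : K) (L : K) (M : K)} (hn0 : n ≠ 0)
    (hn : ∀ a, ∃ b, n * a = b * n) :
    ∃ j k l : ℕ, IsMono (π n) ((j : ℤ), 0, (k : ℤ), (l : ℤ)) := by
  have hf0 : π n ≠ 0 := fun h => hn0 (hπ.injective hP1 (by rw [h, map_zero]))
  have hcomm : ∀ a, ∃ b, π n * π a = π b * π n := by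
    intro a
    obtain ⟨b, hb⟩ := hn a
    exact ⟨b, by rw [← map_mul, hb, map_mul]⟩
  obtain ⟨bz, hz⟩ := hcomm (wz K P Q L M)
  obtain ⟨bx, hx⟩ := hcomm (wx K P Q L M)
  obtain ⟨bs, hs⟩ := hcomm (ws K P Q L M)
  obtain ⟨bt, ht⟩ := hcomm (wt K P Q L M)
  obtain ⟨b, hy⟩ := hcomm (wy K P Q L M)
  rw [hπ.z hP1] at hz
  rw [hπ.x] at hx
  rw [hπ.s] at hs
  rw [hπ.t] at ht
  rw [hπ.y] at hy
  have hsupp : ∀ w w', coeff (π n) w ≠ 0 → coeff (π n) w' ≠ 0 → w = w' := by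
    rintro ⟨j, m, k, l⟩ ⟨j', m', k', l'⟩ hw hw'
    have h1 := chi_eq_of_mul_E_eq hz hw hw'
    have h2 := chi_eq_of_mul_E_eq hs hw hw'
    have h3 := chi_eq_of_mul_E_eq ht hw hw'
    have h4 := chi_eq_of_mul_E_eq hx hw hw'
    simp only [chi, mul_one, mul_zero, zero_mul, one_mul, zpow_zero, neg_zero] at h1 h2 h3 h4
    have em : m = m' := hP h1
    subst em
    have el : l = l' := by simpa using hQ (mul_right_cancel h2)
    subst el
    have ek : k = k' := by simpa using (hQ (mul_left_cancel h3)).symm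
    subst ek
    have ej : j = j' := (hP (mul_left_cancel h4)).symm
    subst ej
    rfl
  obtain ⟨w, hw⟩ : ∃ w, coeff (π n) w ≠ 0 := by
    by_contra! h
    exact hf0 (coeff.injective (by ext w; simp [h w]))
  have hmono : π n = coeff (π n) w • E w := by
    apply coeff.injective
    ext u
    rw [map_smul, coeff_E, Finsupp.smul_apply, Finsupp.single_apply]
    split_ifs with h
    · subst h; simp
    · by_contra hne
      exact h (hsupp w u hw (by simpa using hne))
  obtain ⟨j, m, k, l⟩ := w
  set c := coeff (π n) (j, m, k, l)
  have hnn : 0 ≤ j ∧ 0 ≤ k ∧ 0 ≤ l := by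
    by_contra h
    exact hw (hπ.coeff_eq_zero n _ h)
  obtain ⟨j, rfl⟩ := Int.eq_ofNat_of_zero_le hnn.1
  obtain ⟨k, rfl⟩ := Int.eq_ofNat_of_zero_le hnn.2.1
  obtain ⟨l, rfl⟩ := Int.eq_ofNat_of_zero_le hnn.2.2
  refine ⟨j, k, l, c, hw, ?_⟩
  suffices hm : m = 0 by rw [hmono, hm]
  -- `π b` is `y` conjugated by the monomial `π n`
  set w : Expo := ((j : ℤ), m, (k : ℤ), (l : ℤ)) with hwdef
  have hb : ∀ u : Expo, coeff (π b) u * (chi P Q L M u w : K) =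
      ((P : K) - 1)⁻¹ * (chi P Q L M w u : K) *
        ((if (1, -1, 0, 0) = u then 1 else 0) - (if (0, -1, 0, 0) = u then 1 else 0)) := by
    intro u
    rw [hmono, smul_mul_assoc, mul_smul_comm] at hy
    have h1 := congrArg (fun f => coeff f (u + w)) (smul_right_injective _ hw hy)
    simp only [coeff_mul_E, coeff_E_mul] at h1
    rw [← h1, torusY, map_smul, map_sub, coeff_E, coeff_E]
    simp only [Finsupp.smul_apply, Finsupp.sub_apply, Finsupp.single_apply, smul_eq_mul]
    ring
  have hchi : ∀ u, (chi P Q L M u w : K) ≠ 0 := fun u => Units.ne_zero _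
  have hbE : π b = coeff (π b) (1, -1, 0, 0) • E (1, -1, 0, 0) +
      coeff (π b) (0, -1, 0, 0) • E (0, -1, 0, 0) := by
    apply coeff.injective
    ext u
    simp only [map_add, map_smul, coeff_E, Finsupp.add_apply, Finsupp.smul_apply,
      Finsupp.single_apply]
    by_cases h1 : ((1, -1, 0, 0) : Expo) = u
    · subst h1; simp
    · by_cases h2 : ((0, -1, 0, 0) : Expo) = u
      · subst h2; simp
      · have := hb u
        rw [if_neg h1, if_neg h2, sub_zero, mul_zero] at this
        simp [h1, h2, (mul_eq_zero.mp this).resolve_right (hchi u)]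
  have heps := hπ.eps_eq_zero b (-1, 0, 0) (by simp)
  rw [hbE, map_add, map_smul, map_smul, eps_E, eps_E] at heps
  simp only [Finsupp.add_apply, Finsupp.smul_apply, Finsupp.single_eq_same, smul_eq_mul,
    mul_one] at heps
  have e1 := hb (1, -1, 0, 0)
  have e2 := hb (0, -1, 0, 0)
  simp only [chi, hwdef] at e1 e2
  simp at e1 e2
  have hPj : ((P : K) ^ j)⁻¹ ≠ 0 := inv_ne_zero (pow_ne_zero _ (Units.ne_zero P))
  have e3 : ((P : K) - 1)⁻¹ * ((L : K) ^ k)⁻¹ * ((M : K) ^ l)⁻¹ * ((P : K) ^ m - 1) = 0 := by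
    linear_combination ((P : K) ^ j)⁻¹ * heps - e1 - e2
  have e4 : (P : K) ^ m - 1 = 0 := by
    refine (mul_eq_zero.mp e3).resolve_left ?_
    exact mul_ne_zero (mul_ne_zero (inv_ne_zero hP1)
      (inv_ne_zero (pow_ne_zero _ (Units.ne_zero L))))
      (inv_ne_zero (pow_ne_zero _ (Units.ne_zero M)))
  apply hP
  ext
  simpa using sub_eq_zero.mp e4

lemma IsEmb.isMono_zst (hπ : IsEmb π) (hP1 : (P : K) - 1 ≠ 0) (j k l : ℕ) :
    IsMono (π (wz K P Q L M ^ j * ws K P Q L M ^ k * wt K P Q L M ^ l))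
      ((j : ℤ), 0, (k : ℤ), (l : ℤ)) := by
  have h := (((E_isMono (P := P) (Q := Q) (L := L) (M := M) (1, 0, 0, 0)).pow j).mul
    ((E_isMono (P := P) (Q := Q) (L := L) (M := M) (0, 0, 1, 0)).pow k)).mul
    ((E_isMono (P := P) (Q := Q) (L := L) (M := M) (0, 0, 0, 1)).pow l)
  simp only [map_mul, map_pow, hπ.z hP1, hπ.s, hπ.t]
  simpa using h

lemma IsEmb.eq_smul_of_isMono (hπ : IsEmb π) (hP1 : (P : K) - 1 ≠ 0)
    {a b : ExtWeyl K (P : K) (Q : K) (L : K) (M : K)} {w : Expo}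
    (ha : IsMono (π a) w) (hb : IsMono (π b) w) : ∃ c : K, c ≠ 0 ∧ a = c • b := by
  obtain ⟨c, hc, h⟩ := ha
  obtain ⟨d, hd, h'⟩ := hb
  refine ⟨c * d⁻¹, mul_ne_zero hc (inv_ne_zero hd), hπ.injective hP1 ?_⟩
  rw [map_smul, h, h', smul_smul, inv_mul_cancel_right₀ hd]

lemma ne_zero_of_isMono {a : ExtWeyl K (P : K) (Q : K) (L : K) (M : K)} {w : Expo}
    (ha : IsMono (π a) w) : a ≠ 0 := by
  rintro rfl
  obtain ⟨c, hc, h⟩ := ha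
  have := congrArg (fun f => coeff f w) h
  simp [coeff_E] at this
  exact hc this.symm

/-! ### Automorphisms fix `z`, `s`, `t` up to scalars -/

/-- The images of `z`, `s`, `t` are normal, hence monomials; the relations among them give the
determinant condition and force `φ z` to be a multiple of a power of `z`. -/
lemma IsEmb.aut_exponents (hπ : IsEmb π) (hP1 : (P : K) - 1 ≠ 0)
    (hP : Function.Injective fun n : ℤ => P ^ n) (hQ : Function.Injective fun n : ℤ => Q ^ n)
    (φ : ExtWeyl K (P : K) (Q : K) (L : K) (M : K) ≃ₐ[K] ExtWeyl K (P : K) (Q : K) (L : K) (M : K)) :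
    ∃ jz js ks ls jt kt lt : ℕ, (ks : ℤ) * lt - ls * kt = 1 ∧
      IsMono (π (φ (wz K P Q L M))) ((jz : ℤ), 0, 0, 0) ∧
      IsMono (π (φ (ws K P Q L M))) ((js : ℤ), 0, (ks : ℤ), (ls : ℤ)) ∧
      IsMono (π (φ (wt K P Q L M))) ((jt : ℤ), 0, (kt : ℤ), (lt : ℤ)) := by
  have hnorm : ∀ n : ExtWeyl K (P : K) (Q : K) (L : K) (M : K), n ≠ 0 →
      (∀ a, ∃ b, n * a = b * n) →
      ∃ j k l : ℕ, IsMono (π (φ n)) ((j : ℤ), 0, (k : ℤ), (l : ℤ)) := by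
    intro n hn0 hn
    refine hπ.normal_isMono hP1 hP hQ (by simpa using hn0) fun a => ?_
    obtain ⟨b, hb⟩ := hn (φ.symm a)
    exact ⟨φ b, by rw [← map_mul, ← hb, map_mul, AlgEquiv.apply_symm_apply]⟩
  have hz0 : wz K P Q L M ≠ 0 :=
    ne_zero_of_isMono (π := π) (w := (1, 0, 0, 0)) (by rw [hπ.z hP1]; exact E_isMono _)
  have hs0 : ws K P Q L M ≠ 0 :=
    ne_zero_of_isMono (π := π) (w := (0, 0, 1, 0)) (by rw [hπ.s]; exact E_isMono _)
  have ht0 : wt K P Q L M ≠ 0 :=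
    ne_zero_of_isMono (π := π) (w := (0, 0, 0, 1)) (by rw [hπ.t]; exact E_isMono _)
  obtain ⟨jz, kz, lz, hz⟩ := hnorm _ hz0 (normal_z (Units.ne_zero P) (Units.ne_zero L)
    (Units.ne_zero M))
  obtain ⟨js, ks, ls, hs⟩ := hnorm _ hs0 normal_s
  obtain ⟨jt, kt, lt, ht⟩ := hnorm _ ht0 (normal_t (Units.ne_zero Q))
  have h1 := hs.chi_eq ht (r := Q) (by
    rw [← map_mul, ← map_mul, rel_st, map_smul, map_smul, map_mul, map_mul])
  have h2 := hs.chi_eq hz (r := 1) (by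
    rw [← map_mul, ← map_mul, rel_sz (Units.ne_zero L), map_mul, map_mul, Units.val_one, one_smul])
  have h3 := ht.chi_eq hz (r := 1) (by
    rw [← map_mul, ← map_mul, rel_tz (Units.ne_zero M), map_mul, map_mul, Units.val_one, one_smul])
  simp only [chi, mul_zero, zero_mul, zpow_zero, one_mul] at h1 h2 h3
  rw [← zpow_one_add] at h1
  have e1 : -((ls : ℤ) * kt) = 1 + -(lt * ks) := hQ h1
  have e2 : -((ls : ℤ) * kz) = -(lz * ks) := hQ h2
  have e3 : -((lt : ℤ) * kz) = -(lz * kt) := hQ h3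
  have det : (ks : ℤ) * lt - ls * kt = 1 := by linear_combination e1
  have ekz : (kz : ℤ) = 0 := by
    linear_combination (-(kz : ℤ)) * det - ks * e3 + kt * e2
  have elz : (lz : ℤ) = 0 := by
    linear_combination (-(lz : ℤ)) * det - ls * e3 + lt * e2
  rw [ekz, elz] at hz
  exact ⟨jz, js, ks, ls, jt, kt, lt, det, hz, hs, ht⟩

/-- The exponent matrices of `φ` and of its inverse are mutually inverse matrices over `ℕ`, hence
permutation matrices, and the determinant condition excludes the exchange of `s` and `t`. -/
lemma IsEmb.aut_zst (hπ : IsEmb π) (hP1 : (P : K) - 1 ≠ 0)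
    (hP : Function.Injective fun n : ℤ => P ^ n) (hQ : Function.Injective fun n : ℤ => Q ^ n)
    (φ : ExtWeyl K (P : K) (Q : K) (L : K) (M : K) ≃ₐ[K] ExtWeyl K (P : K) (Q : K) (L : K) (M : K)) :
    IsMono (π (φ (wz K P Q L M))) (1, 0, 0, 0) ∧
      IsMono (π (φ (ws K P Q L M))) (0, 0, 1, 0) ∧
      IsMono (π (φ (wt K P Q L M))) (0, 0, 0, 1) := by
  obtain ⟨jz, js, ks, ls, jt, kt, lt, det, hz, hs, ht⟩ := hπ.aut_exponents hP1 hP hQ φ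
  obtain ⟨iz, is, as, bs, it, as₂, bt, det', hz', hs', ht'⟩ := hπ.aut_exponents hP1 hP hQ φ.symm
  -- the exponent of `φ (c z^j s^k t^l)` in terms of those of `φ z`, `φ s`, `φ t`
  have comp : ∀ (a : ExtWeyl K (P : K) (Q : K) (L : K) (M : K)) (j k l : ℕ) (w : Expo),
      IsMono (π (φ.symm a)) ((j : ℤ), 0, (k : ℤ), (l : ℤ)) → IsMono (π a) w →
      w = ((j : ℤ) * jz + k * js + l * jt, 0, (k : ℤ) * ks + l * kt, (k : ℤ) * ls + l * lt) := by
    intro a j k l w h1 h2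
    obtain ⟨c, hc, h⟩ := hπ.eq_smul_of_isMono hP1 h1 (hπ.isMono_zst hP1 j k l)
    have h3 := congrArg φ h
    rw [AlgEquiv.apply_symm_apply] at h3
    have h4 := (((hz.pow j).mul (hs.pow k)).mul (ht.pow l)).smul hc
    rw [← map_pow, ← map_pow, ← map_pow, ← map_pow, ← map_pow, ← map_pow, ← map_mul, ← map_mul,
      ← map_mul, ← map_mul, ← map_smul, ← map_smul, ← h3] at h4
    rw [h2.unique h4]
    simp
  have c1 := comp _ iz 0 0 (1, 0, 0, 0) (by simpa using hz') (by rw [hπ.z hP1]; exact E_isMono _)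
  have c2 := comp _ is as bs (0, 0, 1, 0) hs' (by rw [hπ.s]; exact E_isMono _)
  have c3 := comp _ it as₂ bt (0, 0, 0, 1) ht' (by rw [hπ.t]; exact E_isMono _)
  simp only [Prod.mk.injEq] at c1 c2 c3
  norm_cast at c1 c2 c3
  obtain ⟨c1, -⟩ := c1
  obtain ⟨c21, -, c22, c23⟩ := c2
  obtain ⟨c31, -, c32, c33⟩ := c3
  have ejz : jz = 1 := by
    simp at c1
    exact Nat.eq_one_of_mul_eq_one_left c1.symm
  have hks : ks ≠ 0 := by
    rintro rfl
    have : (0 : ℤ) ≤ ls * kt := by positivity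
    push_cast at det
    omega
  have hlt : lt ≠ 0 := by
    rintro rfl
    have : (0 : ℤ) ≤ ls * kt := by positivity
    push_cast at det
    omega
  have hbs : bs = 0 := by
    have : bs * lt = 0 := by omega
    exact (Nat.mul_eq_zero.mp this).resolve_right hlt
  have hat : as₂ = 0 := by
    have : as₂ * ks = 0 := by omega
    exact (Nat.mul_eq_zero.mp this).resolve_right hks
  subst hbs hat ejz
  simp only [zero_mul, add_zero, zero_add] at c22 c23 c32 c33 c21 c31
  obtain rfl := Nat.eq_one_of_mul_eq_one_right c22.symm
  obtain rfl := Nat.eq_one_of_mul_eq_one_left c22.symm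
  obtain rfl := Nat.eq_one_of_mul_eq_one_right c33.symm
  obtain rfl := Nat.eq_one_of_mul_eq_one_left c33.symm
  have e1 : ls = 0 := by omega
  have e2 : kt = 0 := by omega
  have e3 : js = 0 := by omega
  have e4 : jt = 0 := by omega
  subst e1 e2 e3 e4
  exact ⟨by simpa using hz, by simpa using hs, by simpa using ht⟩

/-! ### Automorphisms scale `x` and `y` -/

/-- Commutation with `z`, `s`, `t` gives `φ x = f(z) x` and `φ y = g(z) x⁻¹` in the torus. As
`φ x * φ y` has degree at most `1` in `z` and `g` is divisible by `z - 1`, `f` is constant and `g` is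
a multiple of `z - 1`. -/
lemma IsEmb.aut_xy (hπ : IsEmb π) (hP1 : (P : K) - 1 ≠ 0)
    (hP : Function.Injective fun n : ℤ => P ^ n) (hQ : Function.Injective fun n : ℤ => Q ^ n)
    (φ : ExtWeyl K (P : K) (Q : K) (L : K) (M : K) ≃ₐ[K] ExtWeyl K (P : K) (Q : K) (L : K) (M : K)) :
    ∃ a b : K, φ (wx K P Q L M) = a • wx K P Q L M ∧ φ (wy K P Q L M) = b • wy K P Q L M := by
  obtain ⟨hz, hs, ht⟩ := hπ.aut_zst hP1 hP hQ φ
  set f := π (φ (wx K P Q L M)) with hf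
  set g := π (φ (wy K P Q L M)) with hg
  have fsupp : ∀ w, coeff f w ≠ 0 → 0 ≤ w.1 ∧ w.2 = (1, 0, 0) := by
    intro w hw
    have hnn : 0 ≤ w.1 ∧ 0 ≤ w.2.2.1 ∧ 0 ≤ w.2.2.2 := by
      by_contra h
      exact hw (hπ.coeff_eq_zero _ _ h)
    refine ⟨hnn.1, ?_⟩
    have h1 := chi_eq_of_comm hz (f := f) (r := P) (by
      rw [hf, ← map_mul, ← map_mul, rel_xz, map_smul, map_smul, map_mul, map_mul]) hw
    have h2 := chi_eq_of_comm hs (f := f) (r := L⁻¹) (by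
      rw [hf, ← map_mul, ← map_mul, ← map_mul, ← map_mul, rel_sx, map_smul, map_smul, smul_smul,
        Units.inv_mul, one_smul]) hw
    have h3 := chi_eq_of_comm ht (f := f) (r := M⁻¹) (by
      rw [hf, ← map_mul, ← map_mul, ← map_mul, ← map_mul, rel_tx, map_smul, map_smul, smul_smul,
        Units.inv_mul, one_smul]) hw
    obtain ⟨j, m, k, l⟩ := w
    simp only [chi, mul_one, mul_zero, zero_mul, one_mul, zpow_zero, neg_zero] at h1 h2 h3
    have em : m = 1 := hP (by simpa using h1)
    subst em
    simp only [zpow_one, inv_mul_cancel, inv_mul_cancel_left] at h2 h3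
    have el : l = 0 := by
      have : -l = 0 := hQ (by simpa using h2)
      omega
    have ek : k = 0 := by
      have : -k = 0 := hQ (by simpa using h3.symm)
      omega
    simp [el, ek]
  have gsupp : ∀ w, coeff g w ≠ 0 → 0 ≤ w.1 ∧ w.2 = (-1, 0, 0) := by
    intro w hw
    have hnn : 0 ≤ w.1 ∧ 0 ≤ w.2.2.1 ∧ 0 ≤ w.2.2.2 := by
      by_contra h
      exact hw (hπ.coeff_eq_zero _ _ h)
    refine ⟨hnn.1, ?_⟩
    have h1 := chi_eq_of_comm hz (f := g) (r := P⁻¹) (by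
      rw [hg, ← map_mul, ← map_mul, ← map_mul, ← map_mul, rel_zy, map_smul, map_smul, smul_smul,
        Units.inv_mul, one_smul]) hw
    have h2 := chi_eq_of_comm hs (f := g) (r := L) (by
      rw [hg, ← map_mul, ← map_mul, ← map_mul, ← map_mul, rel_sy, map_smul, map_smul, smul_smul,
        mul_inv_cancel₀ (Units.ne_zero L), one_smul]) hw
    have h3 := chi_eq_of_comm ht (f := g) (r := M) (by
      rw [hg, ← map_mul, ← map_mul, ← map_mul, ← map_mul, rel_ty, map_smul, map_smul, smul_smul,
        mul_inv_cancel₀ (Units.ne_zero M), one_smul]) hw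
    obtain ⟨j, m, k, l⟩ := w
    simp only [chi, mul_one, mul_zero, zero_mul, one_mul, zpow_zero, neg_zero] at h1 h2 h3
    have em : m = -1 := hP (by simpa using h1)
    subst em
    simp only [zpow_neg_one, mul_inv_cancel, mul_inv_cancel_left] at h2 h3
    have el : l = 0 := by
      have : -l = 0 := hQ (by simpa using h2)
      omega
    have ek : k = 0 := by
      have : -k = 0 := hQ (by simpa using h3.symm)
      omega
    simp [el, ek]
  have hx0 : wx K P Q L M ≠ 0 :=
    ne_zero_of_isMono (π := π) (w := (0, 1, 0, 0)) (by rw [hπ.x]; exact E_isMono _)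
  have hy0 : wy K P Q L M ≠ 0 := by
    intro h
    have h1 := rel_weyl (K := K) (p := P) (q := Q) (lam := L) (mu := M)
    rw [h] at h1
    simp only [mul_zero, zero_mul, smul_zero, zero_add] at h1
    apply hx0
    rw [← mul_one (wx K _ _ _ _), ← h1, mul_zero]
  have hf0 : f ≠ 0 := fun h => hx0 (φ.injective (hπ.injective hP1 (by simpa using h)))
  have hg0 : g ≠ 0 := fun h => hy0 (φ.injective (hπ.injective hP1 (by simpa using h)))
  obtain ⟨u, v, hu, hv, hu1, hv1, huv⟩ := exists_top ord ord_injective hf0 hg0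
  have fst_le : ∀ w w' : Expo, ord w ≤ ord w' → w.1 ≤ w'.1 := by
    intro w w' h
    rcases Prod.Lex.toLex_le_toLex.mp h with h | h
    · exact h.le
    · exact h.1.le
  obtain ⟨c, hc, hzc⟩ := hz
  have hfg : f * g = ((P : K) - 1)⁻¹ • (((P : K) * c) • E (1, 0, 0, 0) - E 0) := by
    have h1 : ((P : K) - 1) • (wx K P Q L M * wy K P Q L M) = (P : K) • wz K P Q L M - 1 := by
      rw [wz_eq_s7, rel_weyl]; module
    have h2 := congrArg (fun a => π (φ a)) h1
    simp only [map_smul, map_mul, map_sub, map_one] at h2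
    rw [hzc, smul_smul, one_eq] at h2
    rw [← h2, smul_smul, inv_mul_cancel₀ hP1, one_smul]
  have huv1 : u.1 + v.1 ≤ 1 := by
    rw [hfg] at huv
    by_contra hlt
    apply huv
    have n1 : ((1, 0, 0, 0) : Expo) ≠ u + v := by
      intro h
      have := congrArg Prod.fst h
      simp at this; omega
    have n2 : (0 : Expo) ≠ u + v := by
      intro h
      have := congrArg Prod.fst h
      simp at this; omega
    simp [coeff_E, n1, n2]
  have hgE : v.1 ≤ 1 → g = coeff g (1, -1, 0, 0) • E (1, -1, 0, 0) +
      coeff g (0, -1, 0, 0) • E (0, -1, 0, 0) := by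
    intro hv2
    apply coeff.injective
    ext w
    simp only [map_add, map_smul, coeff_E, Finsupp.add_apply, Finsupp.smul_apply,
      Finsupp.single_apply]
    by_cases h1 : ((1, -1, 0, 0) : Expo) = w
    · subst h1; simp
    · by_cases h2 : ((0, -1, 0, 0) : Expo) = w
      · subst h2; simp
      · by_contra hne
        have hw : coeff g w ≠ 0 := by simpa [h1, h2] using hne
        obtain ⟨h3, h4⟩ := gsupp w hw
        have h5 := fst_le _ _ (hv1 w hw)
        obtain ⟨j, w⟩ := w
        simp only at h3 h4 h5
        subst h4
        have : j = 0 ∨ j = 1 := by omega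
        rcases this with rfl | rfl
        · exact h2 rfl
        · exact h1 rfl
  have hu0 := (fsupp u hu).1
  have hv0 := (gsupp v hv).1
  have hgE' := hgE (by omega)
  have heps := hπ.eps_eq_zero (φ (wy K P Q L M)) (-1, 0, 0) (by simp)
  rw [← hg, hgE', map_add, map_smul, map_smul, eps_E, eps_E] at heps
  simp only [Finsupp.add_apply, Finsupp.smul_apply, Finsupp.single_eq_same, smul_eq_mul,
    mul_one] at heps
  have hb0 : coeff g (1, -1, 0, 0) ≠ 0 := by
    intro h
    rw [h, zero_add] at heps
    rw [h, heps] at hgE'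
    exact hg0 (by simpa using hgE')
  have hv2 : 1 ≤ v.1 := fst_le _ _ (hv1 _ hb0)
  refine ⟨coeff f (0, 1, 0, 0), coeff g (1, -1, 0, 0) * ((P : K) - 1), hπ.injective hP1 ?_,
    hπ.injective hP1 ?_⟩
  · rw [map_smul, hπ.x, ← hf]
    apply coeff.injective
    ext w
    rw [map_smul, coeff_E, Finsupp.smul_apply, Finsupp.single_apply]
    split_ifs with h
    · subst h; simp
    · by_contra hne
      have hw : coeff f w ≠ 0 := by simpa using hne
      obtain ⟨h3, h4⟩ := fsupp w hw
      have h5 := fst_le _ _ (hu1 w hw)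
      obtain ⟨j, w⟩ := w
      simp only at h3 h4 h5
      subst h4
      have : j = 0 := by omega
      subst this
      exact h rfl
  · rw [map_smul, hπ.y, ← hg, torusY, smul_smul, mul_assoc, mul_inv_cancel₀ hP1, mul_one]
    rw [eq_neg_of_add_eq_zero_right heps] at hgE'
    rw [smul_sub]
    conv_lhs => rw [hgE']
    rw [neg_smul, sub_eq_add_neg]

end Automorphisms

/-! ### The scaling automorphisms and the automorphism group -/

section Main

open QTorus

variable {K p q lam mu}

lemma algEquiv_ext_gen {f g : ExtWeyl K p q lam mu ≃ₐ[K] ExtWeyl K p q lam mu}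
    (hx : f (wx K p q lam mu) = g (wx K p q lam mu))
    (hy : f (wy K p q lam mu) = g (wy K p q lam mu))
    (hs : f (ws K p q lam mu) = g (ws K p q lam mu))
    (ht : f (wt K p q lam mu) = g (wt K p q lam mu)) : f = g := by
  have h : (f : ExtWeyl K p q lam mu →ₐ[K] ExtWeyl K p q lam mu) = g :=
    algHom_ext_gen hx hy hs ht
  exact AlgEquiv.ext fun a => DFunLike.congr_fun h a

lemma exists_scaling_hom (α β γ : Kˣ) :
    ∃ f : ExtWeyl K p q lam mu →ₐ[K] ExtWeyl K p q lam mu,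
      f (wx K p q lam mu) = (α : K) • wx K p q lam mu ∧
      f (wy K p q lam mu) = ((α⁻¹ : Kˣ) : K) • wy K p q lam mu ∧
      f (ws K p q lam mu) = (β : K) • ws K p q lam mu ∧
      f (wt K p q lam mu) = (γ : K) • wt K p q lam mu := by
  apply exists_lift
  · rw [smul_mul_smul_comm, smul_mul_smul_comm, Units.mul_inv, Units.inv_mul, one_smul, one_smul,
      rel_weyl, add_sub_cancel_left]
  · rw [smul_mul_smul_comm, smul_mul_smul_comm, rel_st]; module
  · rw [smul_mul_smul_comm, smul_mul_smul_comm, rel_sx]; module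
  · rw [smul_mul_smul_comm, smul_mul_smul_comm, rel_sy]; module
  · rw [smul_mul_smul_comm, smul_mul_smul_comm, rel_tx]; module
  · rw [smul_mul_smul_comm, smul_mul_smul_comm, rel_ty]; module

lemma exists_scaling (α β γ : Kˣ) :
    ∃ f : ExtWeyl K p q lam mu ≃ₐ[K] ExtWeyl K p q lam mu,
      f (wx K p q lam mu) = (α : K) • wx K p q lam mu ∧
      f (wy K p q lam mu) = ((α⁻¹ : Kˣ) : K) • wy K p q lam mu ∧
      f (ws K p q lam mu) = (β : K) • ws K p q lam mu ∧
      f (wt K p q lam mu) = (γ : K) • wt K p q lam mu := by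
  obtain ⟨f, fx, fy, fs, ft⟩ := exists_scaling_hom (p := p) (q := q) (lam := lam) (mu := mu) α β γ
  obtain ⟨g, gx, gy, gs, gt⟩ :=
    exists_scaling_hom (p := p) (q := q) (lam := lam) (mu := mu) α⁻¹ β⁻¹ γ⁻¹
  refine ⟨AlgEquiv.ofAlgHom f g ?_ ?_, fx, fy, fs, ft⟩
  · apply algHom_ext_gen <;>
      simp [fx, fy, fs, ft, gx, gy, gs, gt, smul_smul]
  · apply algHom_ext_gen <;>
      simp [fx, fy, fs, ft, gx, gy, gs, gt, smul_smul]

lemma IsEmb.aut_form {P Q L M : Kˣ}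
    {π : ExtWeyl K (P : K) (Q : K) (L : K) (M : K) →ₐ[K] QTorus P Q L M}
    (hπ : IsEmb π) (hP1 : (P : K) - 1 ≠ 0)
    (hP : Function.Injective fun n : ℤ => P ^ n) (hQ : Function.Injective fun n : ℤ => Q ^ n)
    (φ : ExtWeyl K (P : K) (Q : K) (L : K) (M : K) ≃ₐ[K] ExtWeyl K (P : K) (Q : K) (L : K) (M : K)) :
    ∃ α β γ : Kˣ,
      φ (wx K P Q L M) = (α : K) • wx K P Q L M ∧
      φ (wy K P Q L M) = ((α⁻¹ : Kˣ) : K) • wy K P Q L M ∧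
      φ (ws K P Q L M) = (β : K) • ws K P Q L M ∧
      φ (wt K P Q L M) = (γ : K) • wt K P Q L M ∧
      φ (wz K P Q L M) = wz K P Q L M := by
  obtain ⟨a, b, hx, hy⟩ := hπ.aut_xy hP1 hP hQ φ
  obtain ⟨-, hs, ht⟩ := hπ.aut_zst hP1 hP hQ φ
  obtain ⟨β, hβ, hs⟩ := hπ.eq_smul_of_isMono hP1 hs
    (b := ws K P Q L M) (by rw [hπ.s]; exact E_isMono _)
  obtain ⟨γ, hγ, ht⟩ := hπ.eq_smul_of_isMono hP1 ht
    (b := wt K P Q L M) (by rw [hπ.t]; exact E_isMono _)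
  have hab : a * b = 1 := by
    have h1 := congrArg φ (rel_weyl (K := K) (p := P) (q := Q) (lam := L) (mu := M))
    rw [map_add, map_smul, map_mul, map_mul, map_one, hx, hy, smul_mul_smul_comm,
      smul_mul_smul_comm, rel_weyl] at h1
    rw [smul_add, mul_comm b a, smul_comm] at h1
    have h2 := congrArg (fun r => coeff (π r) 0) (add_left_cancel h1)
    simpa [one_eq, coeff_E] using h2
  refine ⟨⟨a, b, hab, by rw [mul_comm, hab]⟩, Units.mk0 β hβ, Units.mk0 γ hγ, hx, hy, hs, ht, ?_⟩
  rw [wz, map_sub, map_mul, map_mul, hx, hy, smul_mul_smul_comm, smul_mul_smul_comm, mul_comm b a,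
    hab, one_smul, one_smul]

end Main

open QTorus

/-- Assume neither `p` nor `q` is a root of unity. Every `K`-algebra
automorphism `φ` of `A_p(λ, μ, K_q[s,t])` satisfies `φ(x) = α·x`, `φ(y) = α⁻¹·y`,
`φ(s) = β·s`, `φ(t) = γ·t` for some `α, β, γ ∈ K^×` (in particular `φ(z) = z`);
conversely these formulas define an automorphism `φ_{α,β,γ}`, and
`Aut_K(A_p(λ, μ, K_q[s,t])) ≅ (K^×)³` via `(α,β,γ) ↦ φ_{α,β,γ}`. -/
theorem extWeyl_aut_group
    (hp : p ≠ 0) (hq : q ≠ 0) (hlam : lam ≠ 0) (hmu : mu ≠ 0)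
    (hpru : ∀ n : ℕ, 0 < n → p ^ n ≠ 1) (hqru : ∀ n : ℕ, 0 < n → q ^ n ≠ 1) :
    (∀ φ : ExtWeyl K p q lam mu ≃ₐ[K] ExtWeyl K p q lam mu,
      ∃ α β γ : Kˣ,
        φ (wx K p q lam mu) = (α : K) • wx K p q lam mu ∧
        φ (wy K p q lam mu) = ((α⁻¹ : Kˣ) : K) • wy K p q lam mu ∧
        φ (ws K p q lam mu) = (β : K) • ws K p q lam mu ∧
        φ (wt K p q lam mu) = (γ : K) • wt K p q lam mu ∧
        φ (wz K p q lam mu) = wz K p q lam mu) ∧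
    (∃ Φ : (Kˣ × Kˣ × Kˣ) ≃* (ExtWeyl K p q lam mu ≃ₐ[K] ExtWeyl K p q lam mu),
      ∀ α β γ : Kˣ,
        Φ (α, β, γ) (wx K p q lam mu) = (α : K) • wx K p q lam mu ∧
        Φ (α, β, γ) (wy K p q lam mu) = ((α⁻¹ : Kˣ) : K) • wy K p q lam mu ∧
        Φ (α, β, γ) (ws K p q lam mu) = (β : K) • ws K p q lam mu ∧
        Φ (α, β, γ) (wt K p q lam mu) = (γ : K) • wt K p q lam mu) := by
  obtain ⟨P, rfl⟩ : ∃ P : Kˣ, (P : K) = p := ⟨Units.mk0 p hp, rfl⟩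
  obtain ⟨Q, rfl⟩ : ∃ Q : Kˣ, (Q : K) = q := ⟨Units.mk0 q hq, rfl⟩
  obtain ⟨L, rfl⟩ : ∃ L : Kˣ, (L : K) = lam := ⟨Units.mk0 lam hlam, rfl⟩
  obtain ⟨M, rfl⟩ : ∃ M : Kˣ, (M : K) = mu := ⟨Units.mk0 mu hmu, rfl⟩
  have hP1 : (P : K) - 1 ≠ 0 := by
    have := hpru 1 one_pos
    rw [pow_one] at this
    exact sub_ne_zero.mpr this
  obtain ⟨π, hπ⟩ := exists_isEmb (K := K) (P := P) (Q := Q) (L := L) (M := M) hP1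
  have h1 := hπ.aut_form hP1 (zpow_inj_of_not_root hpru) (zpow_inj_of_not_root hqru)
  refine ⟨h1, ?_⟩
  choose Φ hΦ using fun a : Kˣ × Kˣ × Kˣ =>
    exists_scaling (K := K) (p := P) (q := Q) (lam := L) (mu := M) a.1 a.2.1 a.2.2
  have hmul : ∀ a b, Φ (a * b) = Φ a * Φ b := by
    intro a b
    obtain ⟨ax, ay, as, at₁⟩ := hΦ a
    obtain ⟨bx, by₁, bs, bt⟩ := hΦ b
    obtain ⟨cx, cy, cs, ct⟩ := hΦ (a * b)
    apply algEquiv_ext_gen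
    · rw [cx, AlgEquiv.mul_apply, bx, map_smul, ax, smul_smul, mul_comm (b.1 : K)]
      simp
    · rw [cy, AlgEquiv.mul_apply, by₁, map_smul, ay, smul_smul]
      simp [mul_comm]
    · rw [cs, AlgEquiv.mul_apply, bs, map_smul, as, smul_smul, mul_comm (b.2.1 : K)]
      simp
    · rw [ct, AlgEquiv.mul_apply, bt, map_smul, at₁, smul_smul, mul_comm (b.2.2 : K)]
      simp
  have hx0 : wx K (P : K) Q L M ≠ 0 :=
    ne_zero_of_isMono (π := π) (w := (0, 1, 0, 0)) (by rw [hπ.x]; exact E_isMono _)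
  have hs0 : ws K (P : K) Q L M ≠ 0 :=
    ne_zero_of_isMono (π := π) (w := (0, 0, 1, 0)) (by rw [hπ.s]; exact E_isMono _)
  have ht0 : wt K (P : K) Q L M ≠ 0 :=
    ne_zero_of_isMono (π := π) (w := (0, 0, 0, 1)) (by rw [hπ.t]; exact E_isMono _)
  have hbij : Function.Bijective (MonoidHom.mk' Φ hmul) := by
    constructor
    · rintro ⟨α, β, γ⟩ ⟨α', β', γ'⟩ h
      change Φ _ = Φ _ at h
      obtain ⟨ax, ay, as, at₁⟩ := hΦ (α, β, γ)
      obtain ⟨bx, by₁, bs, bt⟩ := hΦ (α', β', γ')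
      rw [h] at ax as at₁
      have e1 : α' = α := Units.ext (smul_left_injective K hx0 (bx.symm.trans ax))
      have e2 : β' = β := Units.ext (smul_left_injective K hs0 (bs.symm.trans as))
      have e3 : γ' = γ := Units.ext (smul_left_injective K ht0 (bt.symm.trans at₁))
      rw [e1, e2, e3]
    · intro φ
      obtain ⟨α, β, γ, hx, hy, hs, ht, -⟩ := h1 φ
      refine ⟨(α, β, γ), ?_⟩
      change Φ _ = φ
      obtain ⟨ax, ay, as, at₁⟩ := hΦ (α, β, γ)
      exact algEquiv_ext_gen (ax.trans hx.symm) (ay.trans hy.symm) (as.trans hs.symm)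
        (at₁.trans ht.symm)
  exact ⟨MulEquiv.ofBijective (MonoidHom.mk' Φ hmul) hbij, fun α β γ => hΦ (α, β, γ)⟩
end
end
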